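/- For the family C_m of lifted extended quadratic residue codes of length 24 modulo 2^m, let A_{3,3} := 2^{−36}·swe_{C_6}(x_0, x_1, x_2, z−y_2, z+y_2−2y_1, z+y_2+2y_1−4y_0, z+y_2+2y_1+4y_0) ∈ ℚ[x_0,x_1,x_2,y_0,y_1,y_2,z]. Then the sum of those monomials of A_{3,3} that are divisible by x_0·y_0 equals D_{3,3} = 97152·x_0^8·y_0^8·(−2·x_1^4·y_1^4 + x_1^4·y_1^2·y_2^2 + x_1^2·x_2^2·y_1^4 − x_1^2·x_2^2·y_1^2·y_2^2). -/

import Mathlib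

/-!
The substitution defining `A_{3,3}` is a partial Fourier transform. The polynomial `F c`
substituted for a coordinate `c` modulo 64 is a sum over `b` modulo 8 of single variables times
additive characters (`toC_F`): if `c` is not divisible by 8 only `b = 0` occurs, with one of the
variables `x₀, x₁, x₂`, and otherwise the variables `y₀, y₁, y₂, z` record the valuation of `b`.
Expanding the product over the coordinates and summing over a class of codewords, all words `b`
modulo 8 outside the dual code cancel (`poisson`, `A_eq`). What remains is a signed sum of
monomials over pairs consisting of a codeword and a dual word modulo 8 that are admissible in
every coordinate. A monomial divisible by `x₀ y₀` needs an odd entry of the codeword and an odd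
entry of the dual word.

Codewords are classified by their reduction modulo 2, a word of the binary Golay code. In the
classes of weight 0, 12 and 24 (`D_A_eq_zero`) and of weight 16 (`D_A_compl`) no pair contributes
such a monomial. The monomial automorphisms of the code (cyclic shift, multiplier and inversion,
the last with unit scalars) permute the 759 octads transitively, and equivalent classes have equal
contributions (`class_cases`, `card_wt_eight`). It thus suffices to treat one octad. For a
systematic generator matrix `M0`, its class reduces to a finite sum modulo 8 over dual words
parametrized by five coordinates and over even message entries (`D_A_rep`). This sum is evaluated
in the kernel by a search in which monomials are coded by products of primes (`S_run`,
`run_perm`). Each octad contributes `2 ^ 43 * bracket` (`D_A_octad`), and `759 * 2 ^ 43 / 2 ^ 36 =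
97152`.

Finally, the given code is identified. By uniqueness of Hensel lifts its generator polynomial is
one of two explicit polynomials (`lift_cases`), and the two codes are the row space of `M0` and
its image under the reversal of the first 23 coordinates (`range_qa`, `range_qb`), which does not
affect the weight enumerator (`sum_code`).
-/

open MvPolynomial
open scoped Classical

noncomputable section

/-- The symmetrized weight enumerator of a code `C ⊆ (ℤ/Nℤ)^n` (for `N = p^m`):
the variable `X i` for `i < m` records the number of coordinates of `p`-adic valuation `i`,
and the last variable `X m` (the variable `z`) records the number of zero coordinates. -/
def swe (p m : ℕ) {N n : ℕ} [NeZero N]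
    (C : Submodule (ZMod N) (Fin n → ZMod N)) : MvPolynomial (Fin (m + 1)) ℚ :=
  ∑ c : Fin n → ZMod N, if c ∈ C then
      (∏ i : Fin m, (X (Fin.castSucc i) : MvPolynomial (Fin (m + 1)) ℚ) ^
          (Finset.univ.filter fun j => c j ≠ 0 ∧ padicValNat p (c j).val = (i : ℕ)).card)
        * (X (Fin.last m) : MvPolynomial (Fin (m + 1)) ℚ) ^
            (Finset.univ.filter fun j => c j = 0).card
    else 0

/-- `g` is a monic irreducible degree-11 factor of `x^23 - 1` over `ℤ/pℤ`. -/
def IsQRFactor (p : ℕ) (g : Polynomial (ZMod p)) : Prop :=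
  g.Monic ∧ g.natDegree = 11 ∧ Irreducible g ∧ g ∣ (Polynomial.X ^ 23 - 1)

/-- `gm` is the (Hensel) lift of `g` to `ℤ/Nℤ` and `C` is the associated lifted extended
cyclic quadratic residue code of length 24: the extension by an overall parity check of the
cyclic code of length 23 generated by `gm`. -/
def IsLiftedQR {p N : ℕ} (hpN : p ∣ N) (g : Polynomial (ZMod p)) (gm : Polynomial (ZMod N))
    (C : Submodule (ZMod N) (Fin 24 → ZMod N)) : Prop :=
  gm.Monic ∧ gm.natDegree = 11 ∧ gm ∣ (Polynomial.X ^ 23 - 1) ∧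
    gm.map (ZMod.castHom hpN (ZMod p)) = g ∧
    ∀ c : Fin 24 → ZMod N, c ∈ C ↔
      ((∃ f : Polynomial (ZMod N), ∀ j : Fin 23,
          c (Fin.castSucc j) = ((f * gm) %ₘ (Polynomial.X ^ 23 - 1)).coeff (j : ℕ)) ∧
        c (Fin.last 23) = - ∑ j : Fin 23, c (Fin.castSucc j))

/-- The sum of those monomials of `A` that are divisible by `X i * X j`. -/
def divPart {σ : Type*} (A : MvPolynomial σ ℚ) (i j : σ) : MvPolynomial σ ℚ :=
  ∑ d ∈ A.support.filter (fun d => d i ≠ 0 ∧ d j ≠ 0), monomial d (A.coeff d)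

set_option linter.constructorNameAsVariable false

/-! ### The substituted weight enumerator as a sum over codewords -/

/-- The index of the variable of the symmetrized weight enumerator that records the coordinate `c`:
the 2-adic valuation of `c`, and `6` for `c = 0`. -/
def idx (c : ZMod 64) : Fin 7 :=
  if c.val % 2 = 1 then 0 else if c.val % 4 = 2 then 1 else if c.val % 8 = 4 then 2
  else if c.val % 16 = 8 then 3 else if c.val % 32 = 16 then 4 else if c.val = 32 then 5 else 6

/-- The substitution of the statement. The variables `X 0, …, X 6` of the target ring stand for
`x₀, x₁, x₂, y₀, y₁, y₂, z`. -/
def sub7 : Fin 7 → MvPolynomial (Fin 7) ℚ :=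
  ![X 0, X 1, X 2, X 6 - X 5, X 6 + X 5 - 2 * X 4,
        X 6 + X 5 + 2 * X 4 - 4 * X 3, X 6 + X 5 + 2 * X 4 + 4 * X 3]

/-- The polynomial substituted for the variable of the coordinate `c`. -/
def F (c : ZMod 64) : MvPolynomial (Fin 7) ℚ := sub7 (idx c)

/-- The variable attached to a pair of a coordinate `c` and a dual coordinate `b`: for `b = 0` it
is `x₀, x₁, x₂` or `z` according to the class of `c` modulo 8, and for `b ≠ 0` it is
`y₀, y₁, y₂` according to the valuation of `b`. -/
def vi (c : ZMod 64) (b : ZMod 8) : Fin 7 :=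
  if b = 0 then
    (if c.val % 2 = 1 then 0 else if c.val % 4 = 2 then 1 else if c.val % 8 = 4 then 2 else 6)
  else if b.val % 2 = 1 then 3 else if b.val % 4 = 2 then 4 else 5

/-- A pair `(c, b)` is admissible when `b = 0` or `c` vanishes modulo 8; only such pairs occur in
the expansion `toC_F` of `F c`. -/
def adm (c : ZMod 64) (b : ZMod 8) : Prop := b = 0 ∨ 8 * c = 0

instance (c : ZMod 64) (b : ZMod 8) : Decidable (adm c b) := by unfold adm; infer_instance

/-- The variable of an admissible pair, and zero for any other pair. -/
def w (c : ZMod 64) (b : ZMod 8) : MvPolynomial (Fin 7) ℚ := if adm c b then X (vi c b) else 0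


lemma padicValNat_two_eq {n k m : ℕ} (h : n = 2 ^ k * m) (hm : m % 2 = 1) :
    padicValNat 2 n = k := by
  subst h
  have : Fact (Nat.Prime 2) := ⟨Nat.prime_two⟩
  rw [padicValNat.mul (by positivity) (by rintro rfl; simp at hm), padicValNat.prime_pow,
    padicValNat.eq_zero_of_not_dvd (by omega)]
  simp

lemma idx_eq_castSucc (c : ZMod 64) (i : Fin 6) :
    idx c = i.castSucc ↔ (c ≠ 0 ∧ padicValNat 2 c.val = (i : ℕ)) := by
  have h0 : c = 0 ↔ c.val = 0 := (ZMod.val_eq_zero c).symm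
  have hlt : c.val < 64 := ZMod.val_lt c
  rw [ne_eq, h0, Fin.ext_iff, Fin.val_castSucc]
  unfold idx
  generalize c.val = n at *
  have hi := i.isLt
  split_ifs with h1 h2 h3 h4 h5 h6
  · rw [padicValNat_two_eq (n := n) (k := 0) (m := n) (by omega) h1]
    simp; omega
  · rw [padicValNat_two_eq (n := n) (k := 1) (m := n / 2) (by omega) (by omega)]
    simp; omega
  · rw [padicValNat_two_eq (n := n) (k := 2) (m := n / 4) (by omega) (by omega)]
    simp; omega
  · rw [padicValNat_two_eq (n := n) (k := 3) (m := n / 8) (by omega) (by omega)]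
    simp; omega
  · rw [padicValNat_two_eq (n := n) (k := 4) (m := n / 16) (by omega) (by omega)]
    simp; omega
  · rw [padicValNat_two_eq (n := n) (k := 5) (m := n / 32) (by omega) (by omega)]
    simp; omega
  · have : n = 0 := by omega
    simp [this]; omega

lemma idx_eq_last (c : ZMod 64) : idx c = Fin.last 6 ↔ c = 0 := by
  have h0 : c = 0 ↔ c.val = 0 := (ZMod.val_eq_zero c).symm
  have hlt : c.val < 64 := ZMod.val_lt c
  rw [h0, Fin.ext_iff]
  unfold idx
  generalize c.val = n at *
  split_ifs with h1 h2 h3 h4 h5 h6 <;> simp <;> omega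

lemma aeval_swe (C : Submodule (ZMod 64) (Fin 24 → ZMod 64)) :
    aeval sub7 (swe 2 6 C) = ∑ c : Fin 24 → ZMod 64, if c ∈ C then ∏ j, F (c j) else 0 := by
  have key : ∀ c : Fin 24 → ZMod 64,
      (∏ i : Fin 6, (X (Fin.castSucc i) : MvPolynomial (Fin 7) ℚ) ^
          (Finset.univ.filter fun j => c j ≠ 0 ∧ padicValNat 2 (c j).val = (i : ℕ)).card)
        * (X (Fin.last 6) : MvPolynomial (Fin 7) ℚ) ^
            (Finset.univ.filter fun j => c j = 0).card = ∏ j, X (idx (c j)) := by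
    intro c
    have h1 := Finset.prod_fiberwise' (Finset.univ : Finset (Fin 24)) (fun j => idx (c j))
      (fun i => (X i : MvPolynomial (Fin 7) ℚ))
    rw [Fin.prod_univ_castSucc] at h1
    simp only [Finset.prod_const, idx_eq_castSucc, idx_eq_last] at h1
    exact h1
  unfold swe
  rw [map_sum]
  refine Finset.sum_congr rfl fun c _ => ?_
  split_ifs with h
  · rw [key c, map_prod]
    simp [F]
  · simp

/-! ### Fourier expansion of a single coordinate -/

/-- The standard additive character `t ↦ exp(2πi t / 64)`. -/
def psi : AddChar (ZMod 64) ℂ := ZMod.stdAddChar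

lemma psi_eq_one {t : ZMod 64} (h : psi t = 1) : t = 0 :=
  ZMod.injective_stdAddChar (h.trans (AddChar.map_zero_eq_one psi).symm)

lemma psi_32 : psi 32 = -1 := by
  have h : psi 32 * psi 32 = 1 := by
    rw [← AddChar.map_add_eq_mul, show (32 : ZMod 64) + 32 = 0 by decide,
      AddChar.map_zero_eq_one]
  rcases mul_self_eq_one_iff.mp h with h | h
  · exact absurd (psi_eq_one h) (by decide)
  · exact h

/-- The average of `psi (k * t)` over the odd `k`, for `t` killed by 8; see `sum_psi`. -/
def eps (t : ZMod 64) : ℚ := if t = 0 then 1 else if t = 32 then -1 else 0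

/-- The odd residues modulo 64. -/
def units64 : Finset (ZMod 64) := Finset.univ.filter fun k => k.val % 2 = 1

lemma sum_psi {t : ZMod 64} (ht : 8 * t = 0) :
    ∑ k ∈ units64, psi (k * t) = 32 * ((eps t : ℚ) : ℂ) := by
  have hshift : ∀ d : ZMod 64, (∀ k, k ∈ units64 ↔ k + d ∈ units64) → d * t = 32 →
      ∑ k ∈ units64, psi (k * t) = 0 := by
    intro d hd hdt
    have h1 : ∑ k ∈ units64, psi (k * t) = ∑ k ∈ units64, psi ((k + d) * t) := by
      symm
      refine Finset.sum_equiv (Equiv.addRight d) (fun k => hd k) (fun k _ => rfl)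
    have h2 : ∑ k ∈ units64, psi ((k + d) * t) = - ∑ k ∈ units64, psi (k * t) := by
      rw [← Finset.sum_neg_distrib]
      refine Finset.sum_congr rfl fun k _ => ?_
      rw [add_mul, hdt, AddChar.map_add_eq_mul, psi_32]; ring
    have h3 := h1.trans h2
    linear_combination h3 / 2
  have hc : t = 0 ∨ t = 32 ∨ 4 * t = 32 ∨ 2 * t = 32 := by
    clear hshift; revert t; decide +kernel
  have h4 : ∀ k : ZMod 64, k ∈ units64 ↔ k + 4 ∈ units64 := by
    unfold units64; simp only [Finset.mem_filter, Finset.mem_univ, true_and]; decide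
  have h2 : ∀ k : ZMod 64, k ∈ units64 ↔ k + 2 ∈ units64 := by
    unfold units64; simp only [Finset.mem_filter, Finset.mem_univ, true_and]; decide
  have hcard : units64.card = 32 := by decide +kernel
  have h32 : ∀ k ∈ units64, k * 32 = 32 := by
    unfold units64; simp only [Finset.mem_filter, Finset.mem_univ, true_and]; decide
  have ne32 : (32 : ZMod 64) ≠ 0 := by decide
  rcases hc with rfl | rfl | h | h
  · simp [eps, hcard]
  · rw [Finset.sum_congr rfl (fun k hk => by rw [h32 k hk, psi_32])]
    simp [eps, hcard, ne32]
  · rw [hshift 4 h4 h]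
    have h0 : t ≠ 0 := by rintro rfl; revert h; decide
    have h1 : t ≠ 32 := by rintro rfl; revert h; decide
    simp [eps, h0, h1]
  · rw [hshift 2 h2 h]
    have h0 : t ≠ 0 := by rintro rfl; revert h; decide
    have h1 : t ≠ 32 := by rintro rfl; revert h; decide
    simp [eps, h0, h1]

/-- Extension of scalars from `ℚ` to `ℂ`, where the character values live. -/
def toC : MvPolynomial (Fin 7) ℚ →+* MvPolynomial (Fin 7) ℂ := MvPolynomial.map (algebraMap ℚ ℂ)

/-- The representative of `b` in `{0, …, 7}`, read modulo 64. -/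
def up (b : ZMod 8) : ZMod 64 := (b.val : ZMod 64)

/-- The substituted polynomial is a partial Fourier transform: for `c` divisible by 8 the
`y`-substitution is the Fourier transform on `ℤ/8ℤ` of the variables, and for the other `c` only
`b = 0` contributes. -/
lemma toC_F (c : ZMod 64) : toC (F c) = ∑ b : ZMod 8, toC (w c b) * C (psi (up b * c)) := by
  by_cases h8 : 8 * c = 0
  · have hz32 : C (psi 32) = (-1 : MvPolynomial (Fin 7) ℂ) := by simp [psi_32]
    obtain ⟨s, rfl⟩ : ∃ s : Fin 8, c = (8 * s.val : ℕ) := by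
      revert c; decide
    have hp : ∀ b : ZMod 8, C (psi (up b * ((8 * s.val : ℕ) : ZMod 64))) =
        (C (psi 8) : MvPolynomial (Fin 7) ℂ) ^ (b.val * s.val) := by
      intro b
      rw [← C_pow, ← AddChar.map_nsmul_eq_pow]
      congr 2
      simp only [up, nsmul_eq_mul]; push_cast; ring
    have h4 : (C (psi 8) : MvPolynomial (Fin 7) ℂ) ^ 4 = -1 := by
      rw [← C_pow, ← AddChar.map_nsmul_eq_pow, ← hz32]
      congr 2
    simp only [hp]
    generalize (C (psi 8) : MvPolynomial (Fin 7) ℂ) = z at h4 ⊢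
    have hw : ∀ (s : Fin 8) (b : ZMod 8), adm (8 * s.val : ℕ) b ∧
        vi (8 * s.val : ℕ) b = vi 0 b := by decide +kernel
    have hw' : ∀ b : ZMod 8, w (8 * s.val : ℕ) b = X (vi 0 b) := by
      intro b; rw [w, if_pos (hw s b).1, (hw s b).2]
    simp only [hw', F]
    have hsum : ∀ f : ZMod 8 → MvPolynomial (Fin 7) ℂ,
      ∑ b, f b = f 0 + f 1 + f 2 + f 3 + f 4 + f 5 + f 6 + f 7 := Fin.sum_univ_eight
    have v0 : (0 : ZMod 8).val = 0 ∧ (1 : ZMod 8).val = 1 ∧ (2 : ZMod 8).val = 2 ∧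
      (3 : ZMod 8).val = 3 ∧ (4 : ZMod 8).val = 4 ∧ (5 : ZMod 8).val = 5 ∧ (6 : ZMod 8).val = 6 ∧
      (7 : ZMod 8).val = 7 := by decide
    obtain ⟨v0, v1, v2, v3, v4, v5, v6, v7⟩ := v0
    have m0 : vi 0 0 = 6 ∧ vi 0 1 = 3 ∧ vi 0 2 = 4 ∧ vi 0 3 = 3 ∧ vi 0 4 = 5 ∧ vi 0 5 = 3 ∧
      vi 0 6 = 4 ∧ vi 0 7 = 3 := by decide
    obtain ⟨m0, m1, m2, m3, m4, m5, m6, m7⟩ := m0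
    rw [hsum, v0, v1, v2, v3, v4, v5, v6, v7, m0, m1, m2, m3, m4, m5, m6, m7]
    have i0 : idx (8 * 0 : ℕ) = 6 ∧ idx (8 * 1 : ℕ) = 3 ∧ idx (8 * 2 : ℕ) = 4 ∧
      idx (8 * 3 : ℕ) = 3 ∧ idx (8 * 4 : ℕ) = 5 ∧ idx (8 * 5 : ℕ) = 3 ∧
      idx (8 * 6 : ℕ) = 4 ∧ idx (8 * 7 : ℕ) = 3 := by decide
    obtain ⟨i0, i1, i2, i3, i4, i5, i6, i7⟩ := i0
    have hz : ∀ k, z ^ (k + 4) = - z ^ k := fun k => by rw [pow_add, h4]; ring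
    fin_cases s <;> dsimp only
    on_goal 1 => rw [i0]
    on_goal 2 => rw [i1]
    on_goal 3 => rw [i2]
    on_goal 4 => rw [i3]
    on_goal 5 => rw [i4]
    on_goal 6 => rw [i5]
    on_goal 7 => rw [i6]
    on_goal 8 => rw [i7]
    all_goals
      simp [sub7, toC, hz]
      try ring
  · have h0 : ∀ b : ZMod 8, b ≠ 0 → w c b = 0 := by
      intro b hb
      simp [w, adm, hb, h8]
    rw [Finset.sum_eq_single 0 (fun b _ hb => by simp [h0 b hb]) (by simp)]
    have : sub7 (idx c) = X (vi c 0) := by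
      have hlt : c.val < 64 := ZMod.val_lt c
      have h8' : c.val % 8 ≠ 0 := by
        intro h; apply h8; revert c; decide
      unfold idx vi
      simp only [if_true]
      generalize c.val = n at *
      split_ifs <;> first | rfl | omega
    simp [F, w, adm, this, up, AddChar.map_zero_eq_one]

/-! ### Poisson summation over classes of codewords -/

/-- The pairing of a word modulo 64 with a word modulo 8. It is taken with
the representatives `up`; on pairs that are admissible in each coordinate it lies in `8ℤ/64ℤ`. -/
def phase (c : Fin 24 → ZMod 64) (b : Fin 24 → ZMod 8) : ZMod 64 := ∑ j, up (b j) * c j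

/-- The contribution of a word `c` and a dual word `b` after averaging the phase over the odd
multiples of `c`. -/
def term (c : Fin 24 → ZMod 64) (b : Fin 24 → ZMod 8) : MvPolynomial (Fin 7) ℚ :=
  eps (phase c b) • ∏ j, w (c j) (b j)

/-- The dual modulo 8 of the row space of `N`. -/
def dual (N : Matrix (Fin 12) (Fin 24) (ZMod 64)) : Finset (Fin 24 → ZMod 8) :=
  Finset.univ.filter fun b => ∀ k, 8 * ∑ j, N k j * up (b j) = 0

lemma w_add (c t : ZMod 64) (b : ZMod 8) : w (c + 8 * t) b = w c b := by
  have h : ∀ c t : ZMod 64, 8 * (c + 8 * t) = 8 * c ∧ (c + 8 * t).val % 2 = c.val % 2 ∧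
    (c + 8 * t).val % 4 = c.val % 4 ∧ (c + 8 * t).val % 8 = c.val % 8 := by decide +kernel
  obtain ⟨h1, h2, h3, h4⟩ := h c t
  unfold w adm vi
  simp only [h1, h2, h3, h4]

lemma w_mul {k : ZMod 64} (hk : k ∈ units64) (c : ZMod 64) (b : ZMod 8) :
    w (k * c) b = w c b := by
  have h : ∀ k : ZMod 64, k.val % 2 = 1 → ∀ c, (8 * (k * c) = 0 ↔ 8 * c = 0) ∧
    (k * c).val % 2 = c.val % 2 ∧ ((k * c).val % 4 = 2 ↔ c.val % 4 = 2) ∧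
    ((k * c).val % 8 = 4 ↔ c.val % 8 = 4) := by decide +kernel
  obtain ⟨h1, h2, h3, h4⟩ := h k (by simpa [units64] using hk) c
  unfold w adm vi
  simp only [h1, h2, h3, h4]

lemma phase_of_ne_zero {c : Fin 24 → ZMod 64} {b : Fin 24 → ZMod 8}
    (h : ∏ j, w (c j) (b j) ≠ 0) : 8 * phase c b = 0 := by
  unfold phase
  rw [Finset.mul_sum]
  refine Finset.sum_eq_zero fun j _ => ?_
  have hj : w (c j) (b j) ≠ 0 := fun h0 => h (Finset.prod_eq_zero (Finset.mem_univ j) h0)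
  have ha : adm (c j) (b j) := by
    by_contra hn; exact hj (by simp [w, hn])
  rcases ha with ha | ha
  · simp [ha, up]
  · rw [mul_left_comm, ha, mul_zero]

lemma phase_add (N : Matrix (Fin 12) (Fin 24) (ZMod 64)) (u t : Fin 12 → ZMod 64)
    (b : Fin 24 → ZMod 8) :
    phase (Matrix.vecMul (u + t) N) b =
      phase (Matrix.vecMul u N) b + ∑ k, t k * ∑ j, N k j * up (b j) := by
  have h : ∑ j, up (b j) * Matrix.vecMul t N j = ∑ k, t k * ∑ j, N k j * up (b j) := by
    simp only [Matrix.vecMul, dotProduct, Finset.mul_sum]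
    rw [Finset.sum_comm]
    exact Finset.sum_congr rfl fun k _ => Finset.sum_congr rfl fun j _ => by ring
  rw [← h, phase, phase, Matrix.add_vecMul, ← Finset.sum_add_distrib]
  exact Finset.sum_congr rfl fun j _ => by rw [Pi.add_apply, mul_add]

lemma phase_smul (k : ZMod 64) (c : Fin 24 → ZMod 64) (b : Fin 24 → ZMod 8) :
    phase (k • c) b = k * phase c b := by
  rw [phase, phase, Finset.mul_sum]
  exact Finset.sum_congr rfl fun j _ => by rw [Pi.smul_apply, smul_eq_mul, mul_left_comm]

lemma psi_sum (f : Fin 24 → ZMod 64) : psi (∑ j, f j) = ∏ j, psi (f j) := by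
  induction (Finset.univ : Finset (Fin 24)) using Finset.induction_on with
  | empty => simp
  | insert a s ha ih => rw [Finset.sum_insert ha, Finset.prod_insert ha, AddChar.map_add_eq_mul, ih]

/-- Poisson summation. Summing over translates of `u` by multiples of 8 kills every `b` outside the
dual of the row space; averaging over odd multiples of `u` replaces the character values by the
rational signs `eps`. -/
theorem poisson (N : Matrix (Fin 12) (Fin 24) (ZMod 64)) (P : Finset (Fin 12 → ZMod 64))
    (h8 : ∀ u t, u + (8 : ZMod 64) • t ∈ P ↔ u ∈ P)
    (hk : ∀ k ∈ units64, ∀ u, k • u ∈ P ↔ u ∈ P) :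
    ∑ u ∈ P, ∏ j, F (Matrix.vecMul u N j) =
      ∑ u ∈ P, ∑ b ∈ dual N, term (Matrix.vecMul u N) b := by
  have hinj : Function.Injective toC := MvPolynomial.map_injective _ (algebraMap ℚ ℂ).injective
  apply hinj
  -- the summand attached to `u` and `b`
  let g : (Fin 12 → ZMod 64) → (Fin 24 → ZMod 8) → MvPolynomial (Fin 7) ℂ := fun u b =>
    toC (∏ j, w (Matrix.vecMul u N j) (b j)) * C (psi (phase (Matrix.vecMul u N) b))
  have hw8 : ∀ (u t : Fin 12 → ZMod 64) (b : Fin 24 → ZMod 8),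
      ∏ j, w (Matrix.vecMul (u + (8 : ZMod 64) • t) N j) (b j) =
        ∏ j, w (Matrix.vecMul u N j) (b j) := by
    intro u t b
    refine Finset.prod_congr rfl fun j _ => ?_
    rw [Matrix.add_vecMul, Matrix.smul_vecMul, Pi.add_apply, Pi.smul_apply, smul_eq_mul, w_add]
  have h1 : ∀ u, toC (∏ j, F (Matrix.vecMul u N j)) = ∑ b, g u b := by
    intro u
    rw [map_prod]
    simp only [toC_F]
    rw [Finset.prod_univ_sum, Fintype.piFinset_univ]
    refine Finset.sum_congr rfl fun b _ => ?_
    rw [Finset.prod_mul_distrib, ← map_prod, ← map_prod]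
    have hp : psi (phase (Matrix.vecMul u N) b) =
        ∏ j, psi (up (b j) * Matrix.vecMul u N j) := psi_sum _
    rw [← hp]
  have h2 : ∀ b, b ∉ dual N → ∑ u ∈ P, g u b = 0 := by
    intro b hb
    simp only [dual, Finset.mem_filter, Finset.mem_univ, true_and, not_forall] at hb
    obtain ⟨k, hkb⟩ := hb
    set z : ℂ := psi (8 * ∑ j, N k j * up (b j)) with hz
    have hz1 : z ≠ 1 := fun h => hkb (psi_eq_one h)
    have hs : ∑ u ∈ P, g u b = C z * ∑ u ∈ P, g u b := by
      rw [Finset.mul_sum]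
      symm
      refine Finset.sum_equiv (Equiv.addRight ((8 : ZMod 64) • Pi.single k 1))
        (fun u => (h8 u _).symm) (fun u _ => ?_)
      simp only [Equiv.coe_addRight, g]
      rw [hw8, phase_add, AddChar.map_add_eq_mul]
      have : ∑ i, ((8 : ZMod 64) • (Pi.single k 1 : Fin 12 → ZMod 64)) i *
          ∑ j, N i j * up (b j) = 8 * ∑ j, N k j * up (b j) := by
        rw [Finset.sum_eq_single k (fun i _ hi => by simp [hi]) (by simp)]
        simp
      rw [this, ← hz, C_mul]; ring
    have hs' : C (1 - z) * ∑ u ∈ P, g u b = 0 := by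
      rw [C_sub, C_1, sub_mul, one_mul, sub_eq_zero]; exact hs
    rcases mul_eq_zero.mp hs' with h | h
    · rw [C_eq_zero, sub_eq_zero] at h
      exact absurd h.symm hz1
    · exact h
  have h3 : ∀ b, ∑ u ∈ P, g u b = ∑ u ∈ P, toC (term (Matrix.vecMul u N) b) := by
    intro b
    have ha : ∀ k ∈ units64, ∑ u ∈ P, g u b =
        ∑ u ∈ P, toC (∏ j, w (Matrix.vecMul u N j) (b j)) *
          C (psi (k * phase (Matrix.vecMul u N) b)) := by
      intro k hku
      have hbij : Function.Bijective (fun u : Fin 12 → ZMod 64 => k • u) := by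
        have hinv : ∀ k : ZMod 64, k.val % 2 = 1 → ∃ l, l * k = 1 := by decide +kernel
        obtain ⟨l, hl⟩ := hinv k (by simpa [units64] using hku)
        rw [← Finite.injective_iff_bijective]
        intro u v huv
        have := congrArg (fun x => l • x) huv
        simpa [smul_smul, hl] using this
      symm
      refine Finset.sum_equiv (Equiv.ofBijective _ hbij) (fun u => (hk k hku u).symm)
        (fun u _ => ?_)
      simp only [Equiv.ofBijective_apply, g]
      have hwk : ∏ j, w (Matrix.vecMul (k • u) N j) (b j) =
          ∏ j, w (Matrix.vecMul u N j) (b j) := by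
        refine Finset.prod_congr rfl fun j _ => ?_
        rw [Matrix.smul_vecMul, Pi.smul_apply, smul_eq_mul, w_mul hku]
      rw [hwk, Matrix.smul_vecMul, phase_smul]
    have hcard : units64.card = 32 := by decide +kernel
    have hsum := Finset.sum_congr rfl ha
    rw [Finset.sum_const, hcard, Finset.sum_comm] at hsum
    have hb : ∀ u, ∑ k ∈ units64, toC (∏ j, w (Matrix.vecMul u N j) (b j)) *
          C (psi (k * phase (Matrix.vecMul u N) b)) = 32 • toC (term (Matrix.vecMul u N) b) := by
      intro u
      rw [← Finset.mul_sum, ← map_sum]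
      unfold term
      by_cases h0 : ∏ j, w (Matrix.vecMul u N j) (b j) = 0
      · simp [h0]
      · rw [sum_psi (phase_of_ne_zero h0), smul_eq_C_mul]
        simp only [toC, map_mul, MvPolynomial.map_C, eq_ratCast]
        rw [nsmul_eq_mul]
        have : (C (32 : ℂ) : MvPolynomial (Fin 7) ℂ) = 32 := map_ofNat C 32
        rw [this]; push_cast; ring
    simp only [hb] at hsum
    rw [← Finset.smul_sum] at hsum
    exact smul_right_injective _ (by norm_num : (32 : ℕ) ≠ 0) hsum
  simp only [map_sum]
  rw [Finset.sum_congr rfl (fun u _ => h1 u), Finset.sum_comm, Finset.sum_comm (s := P),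
    ← Finset.sum_subset (Finset.subset_univ (dual N)) (fun b _ hb => h2 b hb)]
  exact Finset.sum_congr rfl fun b _ => h3 b

/-! ### The code, its classes modulo 2 and its monomial automorphisms -/

/-- A systematic generator matrix of the lifted extended quadratic residue code modulo 64. -/
def M0 : Matrix (Fin 12) (Fin 24) (ZMod 64) :=
  !![1, 0, 0, 0, 0, 0, 0, 0, 0, 0, 0, 0, 63, 22, 25, 4, 45, 21, 17, 38, 60, 20, 23, 45;
     0, 1, 0, 0, 0, 0, 0, 0, 0, 0, 0, 0, 23, 5, 23, 61, 57, 10, 14, 39, 2, 48, 3, 34;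
     0, 0, 1, 0, 0, 0, 0, 0, 0, 0, 0, 0, 3, 21, 58, 11, 54, 58, 23, 28, 51, 6, 43, 27;
     0, 0, 0, 1, 0, 0, 0, 0, 0, 0, 0, 0, 43, 17, 34, 14, 60, 47, 31, 53, 8, 23, 41, 12;
     0, 0, 0, 0, 1, 0, 0, 0, 0, 0, 0, 0, 41, 37, 16, 62, 25, 31, 54, 9, 25, 20, 40, 23;
     0, 0, 0, 0, 0, 1, 0, 0, 0, 0, 0, 0, 40, 57, 61, 48, 54, 17, 55, 6, 41, 57, 60, 15;
     0, 0, 0, 0, 0, 0, 1, 0, 0, 0, 0, 0, 60, 0, 29, 13, 36, 10, 21, 15, 54, 57, 21, 3;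
     0, 0, 0, 0, 0, 0, 0, 1, 0, 0, 0, 0, 21, 46, 51, 9, 28, 43, 37, 55, 35, 18, 22, 18;
     0, 0, 0, 0, 0, 0, 0, 0, 1, 0, 0, 0, 22, 49, 8, 27, 43, 14, 53, 33, 15, 43, 24, 52;
     0, 0, 0, 0, 0, 0, 0, 0, 0, 1, 0, 0, 24, 6, 25, 40, 35, 51, 54, 37, 1, 47, 3, 60;
     0, 0, 0, 0, 0, 0, 0, 0, 0, 0, 1, 0, 3, 22, 59, 13, 33, 36, 0, 4, 49, 5, 42, 53;
     0, 0, 0, 0, 0, 0, 0, 0, 0, 0, 0, 1, 42, 39, 60, 19, 43, 47, 26, 4, 44, 41, 63, 19]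

/-- The codeword with message `u`. -/
abbrev word (u : Fin 12 → ZMod 64) : Fin 24 → ZMod 64 := Matrix.vecMul u M0

/-- Reduction modulo 2. -/
def red2 : ZMod 64 →+* ZMod 2 := ZMod.castHom (by norm_num) (ZMod 2)

/-- The message `u` modulo 2. -/
def par (u : Fin 12 → ZMod 64) : Fin 12 → ZMod 2 := fun k => red2 (u k)

/-- The messages with given reduction `p` modulo 2. -/
def cls (p : Fin 12 → ZMod 2) : Finset (Fin 12 → ZMod 64) := Finset.univ.filter fun u => par u = p

/-- The part of the substituted weight enumerator coming from the codewords whose reduction modulo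
2 is the Golay codeword with message `p`. -/
def A (p : Fin 12 → ZMod 2) : MvPolynomial (Fin 7) ℚ := ∑ u ∈ cls p, ∏ j, F (word u j)

lemma mem_cls {p : Fin 12 → ZMod 2} {u : Fin 12 → ZMod 64} : u ∈ cls p ↔ par u = p := by
  simp [cls]

lemma red2_eq_one (c : ZMod 64) : red2 c = 1 ↔ c.val % 2 = 1 := by
  have : ∀ c : ZMod 64, (ZMod.cast c : ZMod 2) = 1 ↔ c.val % 2 = 1 := by decide +kernel
  exact this c

lemma red2_eq_zero (c : ZMod 64) : red2 c = 0 ↔ c.val % 2 = 0 := by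
  have : ∀ c : ZMod 64, (ZMod.cast c : ZMod 2) = 0 ↔ c.val % 2 = 0 := by decide +kernel
  exact this c

lemma F_mul {k : ZMod 64} (hk : k.val % 2 = 1) (c : ZMod 64) : F (k * c) = F c := by
  have h : ∀ k : ZMod 64, k.val % 2 = 1 → ∀ c, idx (k * c) = idx c := by decide +kernel
  rw [F, h k hk, F]

lemma word_castAdd (u : Fin 12 → ZMod 64) (i : Fin 12) : word u (Fin.castLE (by norm_num) i) = u i := by
  have h : ∀ k i : Fin 12, M0 k (Fin.castLE (by norm_num) i) = if k = i then 1 else 0 := by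
    decide +kernel
  simp [word, Matrix.vecMul, dotProduct, h]

lemma par_vecMul {q : ℕ} (u : Fin 12 → ZMod 64) (L : Matrix (Fin 12) (Fin q) (ZMod 64)) :
    (fun j => red2 (Matrix.vecMul u L j)) = Matrix.vecMul (par u) (L.map red2) := by
  ext j
  simp [Matrix.vecMul, dotProduct, par]

lemma par_surjective : Function.Surjective par := by
  intro p
  refine ⟨fun k => ((p k).val : ZMod 64), ?_⟩
  ext k
  simp [par]

/-- The action on messages of the monomial map that permutes coordinates by `π` and rescales them by
`s`, read off from the systematic coordinates. -/
def autMat (π : Fin 24 → Fin 24) (s : Fin 24 → ZMod 64) : Matrix (Fin 12) (Fin 12) (ZMod 64) :=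
  fun k i => s (Fin.castLE (by norm_num) i) * M0 k (π (Fin.castLE (by norm_num) i))

/-- A monomial automorphism of the code with unit scalars permutes the classes modulo 2 and preserves
their contributions, since `F` only depends on valuations. -/
lemma A_aut (π : Equiv.Perm (Fin 24)) (s : Fin 24 → ZMod 64) (hs : ∀ j, (s j).val % 2 = 1)
    (h : ∀ k j, s j * M0 k (π j) = (autMat π s * M0) k j) (p : Fin 12 → ZMod 2) :
    A (Matrix.vecMul p ((autMat π s).map red2)) = A p := by
  set L := autMat π s
  have hw : ∀ u j, word (Matrix.vecMul u L) j = s j * word u (π j) := by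
    intro u j
    rw [word, Matrix.vecMul_vecMul]
    simp only [Matrix.vecMul, dotProduct, ← h, Finset.mul_sum]
    exact Finset.sum_congr rfl fun k _ => by ring
  have hinv : ∀ k : ZMod 64, k.val % 2 = 1 → ∃ l, l * k = 1 := by decide +kernel
  have hinj : Function.Injective (fun u : Fin 12 → ZMod 64 => Matrix.vecMul u L) := by
    intro u v huv
    have h1 : ∀ j, word u (π j) = word v (π j) := by
      intro j
      obtain ⟨l, hl⟩ := hinv _ (hs j)
      have h2 : s j * word u (π j) = s j * word v (π j) := by
        rw [← hw, ← hw]; exact congrArg (fun x => word x j) huv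
      have h3 := congrArg (fun x => l * x) h2
      simpa only [← mul_assoc, hl, one_mul] using h3
    ext i
    rw [← word_castAdd u i, ← word_castAdd v i]
    simpa using h1 (π.symm (Fin.castLE (by norm_num) i))
  have hbij := Finite.injective_iff_bijective.mp hinj
  have hpar : ∀ u, par (Matrix.vecMul u L) = Matrix.vecMul (par u) (L.map red2) :=
    fun u => par_vecMul u L
  have hinj2 : Function.Injective (fun p : Fin 12 → ZMod 2 => Matrix.vecMul p (L.map red2)) := by
    rw [Finite.injective_iff_surjective]
    intro q
    obtain ⟨v, rfl⟩ := par_surjective q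
    obtain ⟨u, rfl⟩ := hbij.2 v
    exact ⟨par u, (hpar u).symm⟩
  unfold A
  symm
  refine Finset.sum_equiv (Equiv.ofBijective _ hbij) (fun u => ?_) (fun u _ => ?_)
  · rw [mem_cls, mem_cls, Equiv.ofBijective_apply, hpar]
    exact ⟨fun h => by rw [h], fun h => hinj2 h⟩
  · simp only [Equiv.ofBijective_apply, hw, F_mul (hs _)]
    exact (Equiv.prod_comp π (fun j => F (word u j))).symm

lemma A_eq (p : Fin 12 → ZMod 2) : A p = ∑ u ∈ cls p, ∑ b ∈ dual M0, term (word u) b := by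
  refine poisson M0 (cls p) (fun u t => ?_) (fun k hk u => ?_)
  · have h8 : red2 8 = 0 := by decide
    rw [mem_cls, mem_cls]
    simp [par, h8, funext_iff]
  · have h1 : red2 k = 1 := (red2_eq_one k).mpr (by simpa [units64] using hk)
    rw [mem_cls, mem_cls]
    simp [par, h1, funext_iff]

/-! ### Classification of the classes modulo 2 -/

/-- A bit as an element of `ZMod 2`. -/
def bit2 (a : Bool) : ZMod 2 := cond a 1 0

/-- The message whose entries are the twelve lowest binary digits of `n`. -/
def vec (n : ℕ) : Fin 12 → ZMod 2 := fun k => bit2 (n.testBit k)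

/-- The exclusive or of the rows selected by the binary digits of `n`, that is, a product of a row
vector with a binary matrix whose rows are encoded as natural numbers. It is written with an
explicit recursor for fast evaluation in the kernel. -/
def act (rows : List ℕ) : ℕ → ℕ :=
  List.rec (motive := fun _ => ℕ → ℕ) (fun _ => 0)
    (fun r _ ih n => cond (Nat.beq (n % 2) 1) (Nat.xor r (ih (n / 2))) (ih (n / 2))) rows

lemma act_cons (r : ℕ) (rs : List ℕ) (n : ℕ) :
    act (r :: rs) n = (cond (n.testBit 0) r 0) ^^^ act rs (n / 2) := by
  have h : act (r :: rs) n =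
      cond (Nat.beq (n % 2) 1) (r ^^^ act rs (n / 2)) (act rs (n / 2)) := rfl
  rw [h, Nat.testBit_zero]
  rcases Nat.mod_two_eq_zero_or_one n with h | h
  · simp [h]; rfl
  · simp [h]

lemma bit2_xor (a b : Bool) : bit2 (a ^^ b) = bit2 a + bit2 b := by
  revert a b; decide

lemma bit2_testBit_act (rows : List ℕ) (n j : ℕ) :
    bit2 ((act rows n).testBit j) =
      ∑ k ∈ Finset.range rows.length, bit2 (n.testBit k) * bit2 ((rows.getD k 0).testBit j) := by
  induction rows generalizing n with
  | nil => simp [act, bit2]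
  | cons r rs ih =>
    rw [act_cons, Nat.testBit_xor, bit2_xor, ih, List.length_cons, Finset.sum_range_succ', add_comm]
    congr 1
    · refine Finset.sum_congr rfl fun k _ => ?_
      rw [List.getD_cons_succ, Nat.testBit_succ]
    · cases h : n.testBit 0 <;> simp [bit2]

lemma act_eq {q : ℕ} (rows : List ℕ) (hl : rows.length = 12)
    (L : Matrix (Fin 12) (Fin q) (ZMod 64))
    (h : ∀ (k : Fin 12) (j : Fin q), (rows.getD (k : ℕ) 0).testBit (j : ℕ) = decide ((L k j).val % 2 = 1)) (n : ℕ) :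
    (fun j : Fin q => bit2 ((act rows n).testBit j)) = Matrix.vecMul (vec n) (L.map red2) := by
  ext j
  have hb : ∀ (k : Fin 12) (j : Fin q), bit2 ((rows.getD (k : ℕ) 0).testBit (j : ℕ)) = red2 (L k j) := by
    intro k j
    rw [h]
    by_cases h1 : (L k j).val % 2 = 1
    · rw [(red2_eq_one _).mpr h1]; simp [h1, bit2]
    · rw [(red2_eq_zero _).mpr (by omega)]; simp [h1, bit2]
  rw [bit2_testBit_act, hl, ← Fin.sum_univ_eq_sum_range
    (fun k => bit2 (n.testBit k) * bit2 ((rows.getD k 0).testBit j))]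
  simp only [Matrix.vecMul, dotProduct, Matrix.map_apply, vec, hb]

/-- The action modulo 2 of the cyclic shift on messages, one number per row. -/
def rowsS : List ℕ := [2048, 2049, 2050, 2052, 2056, 16, 32, 2112, 128, 256, 2560, 1024]
/-- The action modulo 2 of the multiplier `j ↦ 2 j` on messages. -/
def rowsU : List ℕ := [3009, 2496, 3650, 2624, 1348, 1664, 2696, 1728, 1808, 3456, 1504, 2304]
/-- The action modulo 2 of the inversion `j ↦ -1/j` (with signs) on messages. -/
def rowsT : List ℕ := [1043, 1226, 2443, 210, 1489, 913, 75, 344, 1480, 1394, 1289, 1183]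
/-- The generator matrix of the Golay code, one number per row. -/
def rowsM : List ℕ := [13062145, 4845570, 13938692, 7221256, 10170384, 11952160, 15515712, 2019456,
  4038912, 8077824, 11654144, 14919680]

/-- The cyclic shift of the 23 coordinates other than the check coordinate. -/
def piS : Fin 24 → Fin 24 := ![1, 2, 3, 4, 5, 6, 7, 8, 9, 10, 11, 12, 13, 14, 15, 16, 17, 18, 19,
  20, 21, 22, 0, 23]
/-- The multiplier `j ↦ 2 j` modulo 23. -/
def piU : Fin 24 → Fin 24 := ![0, 2, 4, 6, 8, 10, 12, 14, 16, 18, 20, 22, 1, 3, 5, 7, 9, 11, 13,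
  15, 17, 19, 21, 23]
/-- The inversion `j ↦ -1/j` of the projective line over the field with 23 elements, the check
coordinate `23` being the point at infinity. -/
def piT : Fin 24 → Fin 24 := ![23, 22, 11, 15, 17, 9, 19, 13, 20, 5, 16, 2, 21, 7, 18, 3, 10, 4,
  14, 6, 8, 12, 1, 0]
/-- The unit scalars that make `piT` an automorphism of the code modulo 64. -/
def sgT : Fin 24 → ZMod 64 := ![37, 1, 1, 1, 1, 63, 1, 63, 1, 1, 63, 63, 1, 1, 63, 63, 1, 63, 1,
  63, 63, 63, 63, 19]

lemma A_act (π : Fin 24 → Fin 24) (s : Fin 24 → ZMod 64) (rows : List ℕ)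
    (hπ : Function.Injective π) (hs : ∀ j, (s j).val % 2 = 1)
    (h : ∀ k j, s j * M0 k (π j) = ∑ i, autMat π s k i * M0 i j) (hl : rows.length = 12)
    (hr : ∀ (k j : Fin 12), (rows.getD (k : ℕ) 0).testBit (j : ℕ) = decide ((autMat π s k j).val % 2 = 1))
    (n : ℕ) : A (vec (act rows n)) = A (vec n) := by
  have h1 := act_eq rows hl (autMat π s) hr n
  rw [show vec (act rows n) = fun j : Fin 12 => bit2 ((act rows n).testBit j) from rfl, h1]
  exact A_aut (Equiv.ofBijective π (Finite.injective_iff_bijective.mp hπ)) s hs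
    (fun k j => by rw [Matrix.mul_apply]; exact h k j) _

lemma A_actS (n : ℕ) : A (vec (act rowsS n)) = A (vec n) :=
  A_act piS (fun _ => 1) rowsS (by decide +kernel) (by decide +kernel) (by decide +kernel) rfl
    (by decide +kernel) n

lemma A_actU (n : ℕ) : A (vec (act rowsU n)) = A (vec n) :=
  A_act piU (fun _ => 1) rowsU (by decide +kernel) (by decide +kernel) (by decide +kernel) rfl
    (by decide +kernel) n

lemma A_actT (n : ℕ) : A (vec (act rowsT n)) = A (vec n) :=
  A_act piT sgT rowsT (by decide +kernel) (by decide +kernel) (by decide +kernel) rfl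
    (by decide +kernel) n

/-- The orbit of `r` under the group generated by the shift and the multiplier, of order `11 · 23`. -/
def orb (r : ℕ) : List ℕ :=
  (List.iterate (act rowsU) r 11).flatMap fun x => List.iterate (act rowsS) x 23

lemma A_iterate {f : ℕ → ℕ} (hf : ∀ n, A (vec (f n)) = A (vec n)) (m n : ℕ) :
    A (vec (f^[m] n)) = A (vec n) := by
  induction m with
  | zero => rfl
  | succ m ih => rw [Function.iterate_succ_apply', hf, ih]

lemma A_orb {r n : ℕ} (h : n ∈ orb r) : A (vec n) = A (vec r) := by
  simp only [orb, List.mem_flatMap, List.mem_iterate] at h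
  obtain ⟨x, ⟨i, _, rfl⟩, j, _, rfl⟩ := h
  rw [A_iterate A_actS, A_iterate A_actU]

/-- Three orbits of the group of order `11 · 23` which are fused by the inversion. For an octad or a
complement of an octad `r` as used below, they exhaust all the words of the same weight. -/
def orbits (r : ℕ) : List ℕ :=
  orb r ++ (orb (act rowsT (act rowsS r)) ++ orb (act rowsT (act rowsS (act rowsS r))))

lemma A_orbits {r n : ℕ} (h : n ∈ orbits r) : A (vec n) = A (vec r) := by
  simp only [orbits, List.mem_append] at h
  rcases h with h | h | h <;> rw [A_orb h] <;> simp only [A_actT, A_actS]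

/-- A list of natural numbers as a bit mask. -/
def bitset (l : List ℕ) : ℕ := l.foldr (fun n s => (1 <<< n) ||| s) 0

lemma mem_of_bitset {l : List ℕ} {m : ℕ} (h : (bitset l).testBit m = true) : m ∈ l := by
  induction l with
  | nil => simp [bitset] at h
  | cons a l ih =>
    rw [bitset, List.foldr_cons, Nat.testBit_lor, Nat.one_shiftLeft, Nat.testBit_two_pow,
      Bool.or_eq_true] at h
    rcases h with h | h
    · simp at h; simp [h]
    · exact List.mem_cons_of_mem _ (ih h)

/-- The number of ones among the lowest `k` binary digits. -/
def pop (k : ℕ) : ℕ → ℕ :=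
  Nat.rec (motive := fun _ => ℕ → ℕ) (fun _ => 0) (fun _ ih w => w % 2 + ih (w / 2)) k

lemma pop_eq (k w : ℕ) : pop k w = ∑ j ∈ Finset.range k, (w.testBit j).toNat := by
  induction k generalizing w with
  | zero => rfl
  | succ k ih =>
    have h : pop (k + 1) w = w % 2 + pop k (w / 2) := rfl
    have h2 : w % 2 = (w.testBit 0).toNat := by
      rw [Nat.testBit_zero]; rcases Nat.mod_two_eq_zero_or_one w with h | h <;> simp [h]
    rw [h, h2, ih, Finset.sum_range_succ', add_comm]; simp only [Nat.testBit_succ]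

/-- The word of the binary Golay code with message `p`. -/
abbrev word2 (p : Fin 12 → ZMod 2) : Fin 24 → ZMod 2 := Matrix.vecMul p (M0.map red2)

/-- The weight of the Golay codeword with message `p`. -/
def wt (p : Fin 12 → ZMod 2) : ℕ := (Finset.univ.filter fun j => word2 p j = 1).card

lemma word2_vec (n : ℕ) : word2 (vec n) = fun j : Fin 24 => bit2 ((act rowsM n).testBit j) :=
  (act_eq rowsM rfl M0 (by decide +kernel) n).symm

lemma wt_vec (n : ℕ) : wt (vec n) = pop 24 (act rowsM n) := by
  rw [wt, word2_vec, pop_eq, ← Fin.sum_univ_eq_sum_range (fun j => ((act rowsM n).testBit j).toNat),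
    Finset.card_filter]
  refine Finset.sum_congr rfl fun j _ => ?_
  beta_reduce
  generalize (act rowsM n).testBit j = a
  cases a <;> simp [bit2]

lemma vec_bijective : Function.Bijective (fun n : Fin 4096 => vec n) := by
  rw [Fintype.bijective_iff_injective_and_card]
  refine ⟨fun m n h => Fin.ext (Nat.eq_of_testBit_eq fun i => ?_), by simp⟩
  have hb : ∀ a b, bit2 a = bit2 b → a = b := by decide
  by_cases hi : i < 12
  · exact hb _ _ (congrFun h ⟨i, hi⟩)
  · have h2 : 4096 ≤ 2 ^ i :=
      le_trans (by norm_num) (Nat.pow_le_pow_right (by norm_num) (by omega : 12 ≤ i))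
    rw [Nat.testBit_lt_two_pow (m.isLt.trans_le h2), Nat.testBit_lt_two_pow (n.isLt.trans_le h2)]

/-- The test that the Golay codeword of `n` has weight 0, 8, 12, 16 or 24, and that it lies in the
set with the first bit mask if the weight is 8, in the one with the second if it is 16. -/
def chkWt (S S' n : ℕ) : Bool :=
  match pop 24 (act rowsM n) with
  | 0 => true
  | 8 => S.testBit n
  | 12 => true
  | 16 => S'.testBit n
  | 24 => true
  | _ => false

set_option maxRecDepth 100000 in
lemma chk_all : ∀ i < 64, ∀ j < 64,
    chkWt (bitset (orbits 1)) (bitset (orbits 4094)) (64 * i + j) = true := by decide +kernel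

set_option maxRecDepth 100000 in
lemma card_octads :
    ∑ i ∈ Finset.range 64, ∑ j ∈ Finset.range 64,
      (pop 24 (act rowsM (j + 64 * i)) == 8).toNat = 759 := by decide +kernel

lemma chkWt_spec {S S' n : ℕ} (h : chkWt S S' n = true) :
    (wt (vec n) = 0 ∨ wt (vec n) = 12 ∨ wt (vec n) = 24) ∨
    (wt (vec n) = 8 ∧ S.testBit n = true) ∨ (wt (vec n) = 16 ∧ S'.testBit n = true) := by
  rw [wt_vec]
  unfold chkWt at h
  generalize pop 24 (act rowsM n) = q at *
  split at h <;> simp_all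

/-- Up to automorphisms there is a single class of octads (represented by the message 1) and a single
class of complements of octads (represented by 4094). -/
theorem class_cases (p : Fin 12 → ZMod 2) : (wt p = 0 ∨ wt p = 12 ∨ wt p = 24) ∨
    (wt p = 8 ∧ A p = A (vec 1)) ∨ (wt p = 16 ∧ A p = A (vec 4094)) := by
  obtain ⟨⟨n, hn⟩, rfl⟩ := vec_bijective.2 p
  have h := chk_all (n / 64) (by omega) (n % 64) (by omega)
  rw [Nat.div_add_mod] at h
  exact (chkWt_spec h).imp_right (Or.imp (And.imp_right fun h => A_orbits (mem_of_bitset h))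
    (And.imp_right fun h => A_orbits (mem_of_bitset h)))

theorem card_wt_eight : (Finset.univ.filter fun p : Fin 12 → ZMod 2 => wt p = 8).card = 759 := by
  rw [Finset.card_filter, ← vec_bijective.sum_comp, ← card_octads]
  simp only [wt_vec]
  rw [← Equiv.sum_comp (finProdFinEquiv (m := 64) (n := 64)), Fintype.sum_prod_type,
    ← Fin.sum_univ_eq_sum_range (fun i => ∑ j ∈ Finset.range 64,
      (pop 24 (act rowsM (j + 64 * i)) == 8).toNat)]
  refine Finset.sum_congr rfl fun i _ => ?_
  rw [← Fin.sum_univ_eq_sum_range (fun j => (pop 24 (act rowsM (j + 64 * i)) == 8).toNat)]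
  refine Finset.sum_congr rfl fun j _ => ?_
  rw [finProdFinEquiv_apply_val]
  generalize pop 24 _ = q
  by_cases h : q = 8
  · simp [h]
  · rw [if_neg h, beq_eq_false_iff_ne.mpr h]; rfl

/-! ### The monomials divisible by `x₀ y₀` -/

lemma coeff_divPart {σ : Type*} (B : MvPolynomial σ ℚ) (i j : σ) (d : σ →₀ ℕ) :
    coeff d (divPart B i j) = if d i ≠ 0 ∧ d j ≠ 0 then coeff d B else 0 := by
  unfold divPart
  rw [coeff_sum]
  simp only [coeff_monomial]
  rw [Finset.sum_ite_eq' _ d]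
  simp only [Finset.mem_filter, mem_support_iff]
  by_cases h : coeff d B = 0 <;> simp [h]

/-- The operator `divPart · 0 3`, which keeps the monomials divisible by `x₀ y₀`, as a linear map. -/
def D : MvPolynomial (Fin 7) ℚ →ₗ[ℚ] MvPolynomial (Fin 7) ℚ where
  toFun B := divPart B 0 3
  map_add' B B' := by
    ext d; simp only [coeff_divPart, coeff_add]; split_ifs <;> simp
  map_smul' r B := by
    ext d; simp only [coeff_divPart, coeff_smul, RingHom.id_apply]; split_ifs <;> simp

lemma D_prod (f : Fin 24 → Fin 7) : D (∏ j, X (f j)) =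
    if (∃ j, f j = 0) ∧ (∃ j, f j = 3) then ∏ j, X (f j) else 0 := by
  have hm : (∏ j, X (f j) : MvPolynomial (Fin 7) ℚ) = monomial (∑ j, Finsupp.single (f j) 1) 1 := by
    rw [monomial_sum_one]; rfl
  have hz : ∀ i, (∑ j, Finsupp.single (f j) 1 : Fin 7 →₀ ℕ) i ≠ 0 ↔ ∃ j, f j = i := by
    intro i
    rw [Finsupp.finsetSum_apply, ne_eq, Finset.sum_eq_zero_iff]
    simp [Finsupp.single_apply]
  show divPart _ 0 3 = _
  ext d
  rw [coeff_divPart, hm]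
  by_cases hd : ∑ j, Finsupp.single (f j) 1 = d
  · subst hd
    simp only [hz]
    split_ifs <;> simp
  · simp only [coeff_monomial, if_neg hd, ite_self]
    split_ifs <;> simp [hd]

/-- Only admissible pairs with an odd `c j` opposite `b j = 0` and some odd `b j` contribute to
the monomials divisible by `x₀ y₀`. -/
lemma term_ne_zero {c : Fin 24 → ZMod 64} {b : Fin 24 → ZMod 8} (h : D (term c b) ≠ 0) :
    (∀ j, adm (c j) (b j)) ∧ (∃ j, b j = 0 ∧ (c j).val % 2 = 1) ∧ (∃ j, (b j).val % 2 = 1) := by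
  have ha : ∀ j, adm (c j) (b j) := by
    intro j
    by_contra hn
    apply h
    rw [term, Finset.prod_eq_zero (Finset.mem_univ j) (by simp [w, hn]), smul_zero, map_zero]
  have hw : ∏ j, w (c j) (b j) = ∏ j, X (vi (c j) (b j)) :=
    Finset.prod_congr rfl fun j _ => by simp [w, ha j]
  have h0 : ∀ (c : ZMod 64) (b : ZMod 8), vi c b = 0 → b = 0 ∧ c.val % 2 = 1 := by decide +kernel
  have h3 : ∀ (c : ZMod 64) (b : ZMod 8), vi c b = 3 → b.val % 2 = 1 := by decide +kernel
  rw [term, hw, map_smul, D_prod] at h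
  split_ifs at h with hc
  · obtain ⟨⟨j, hj⟩, ⟨k, hk⟩⟩ := hc
    exact ⟨ha, ⟨j, h0 _ _ hj⟩, ⟨k, h3 _ _ hk⟩⟩
  · simp at h

lemma D_term {c : Fin 24 → ZMod 64} {b : Fin 24 → ZMod 8}
    (h0 : ∃ j, b j = 0 ∧ (c j).val % 2 = 1) (h3 : ∃ j, (b j).val % 2 = 1) :
    D (term c b) = term c b := by
  by_cases ha : ∀ j, adm (c j) (b j)
  · have hw : ∏ j, w (c j) (b j) = ∏ j, X (vi (c j) (b j)) :=
      Finset.prod_congr rfl fun j _ => by simp [w, ha j]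
    have k0 : ∀ (c : ZMod 64) (b : ZMod 8), b = 0 ∧ c.val % 2 = 1 → vi c b = 0 := by decide +kernel
    have k3 : ∀ (c : ZMod 64) (b : ZMod 8), b.val % 2 = 1 → vi c b = 3 := by decide +kernel
    obtain ⟨j, hj⟩ := h0
    obtain ⟨k, hk⟩ := h3
    rw [term, hw, map_smul, D_prod, if_pos ⟨⟨j, k0 _ _ hj⟩, ⟨k, k3 _ _ hk⟩⟩]
  · push Not at ha
    obtain ⟨j, hj⟩ := ha
    rw [term, Finset.prod_eq_zero (Finset.mem_univ j) (by simp [w, hj]), smul_zero, map_zero]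

/-- Reduction modulo 8. -/
def red8 : ZMod 64 →+* ZMod 8 := ZMod.castHom (by norm_num) (ZMod 8)

lemma red8_eq_zero (c : ZMod 64) : red8 c = 0 ↔ 8 * c = 0 := by
  have : ∀ c : ZMod 64, (ZMod.cast c : ZMod 8) = 0 ↔ 8 * c = 0 := by decide +kernel
  exact this c

lemma red8_up (b : ZMod 8) : red8 (up b) = b := by
  simp [red8, up]

/-- The generator matrix modulo 8. -/
abbrev M8 : Matrix (Fin 12) (Fin 24) (ZMod 8) := M0.map red8

lemma mem_dual {b : Fin 24 → ZMod 8} : b ∈ dual M0 ↔ ∀ k, ∑ j, M8 k j * b j = 0 := by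
  simp only [dual, Finset.mem_filter, Finset.mem_univ, true_and]
  refine forall_congr' fun k => ?_
  rw [← red8_eq_zero, map_sum]
  simp [red8_up]

/-- The code modulo 8 is self-orthogonal. -/
lemma M8_gram : M8 * M8.transpose = 0 := by
  have : ∀ k l, ∑ j, red8 (M0 k j) * red8 (M0 l j) = 0 := by
    unfold red8
    simp only [ZMod.castHom_apply]
    decide +kernel
  ext k l
  simpa [Matrix.mul_apply] using this k l

/-! ### Classes without contribution -/

lemma M8_apply (k : Fin 12) (j : Fin 24) : M8 k j = (ZMod.cast (M0 k j) : ZMod 8) := rfl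

/-- The dual modulo 8 is contained in the code modulo 8: a dual word is the codeword whose message is
its systematic part. -/
lemma dual_eq {b : Fin 24 → ZMod 8} (hb : b ∈ dual M0) :
    b = Matrix.vecMul (fun i : Fin 12 => b (Fin.castLE (by norm_num) i)) M8 := by
  rw [mem_dual] at hb
  set v : Fin 12 → ZMod 8 := fun i : Fin 12 => b (Fin.castLE (by norm_num) i) with hv
  set c : Fin 24 → ZMod 8 := b - Matrix.vecMul v M8 with hc
  have hc0 : ∀ i : Fin 12, c (Fin.castLE (by norm_num) i) = 0 := by
    intro i
    have h : ∀ k i : Fin 12, (ZMod.cast (M0 k (Fin.castLE (by norm_num) i)) : ZMod 8) =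
        if k = i then 1 else 0 := by
      decide +kernel
    simp only [hc, Pi.sub_apply, Matrix.vecMul, dotProduct, M8_apply, h]
    simp [hv]
  have hMc : ∀ k, ∑ j, M8 k j * c j = 0 := by
    intro k
    have h1 : ∑ j, M8 k j * Matrix.vecMul v M8 j = 0 := by
      have h2 : Matrix.mulVec M8 (Matrix.vecMul v M8) = 0 := by
        rw [← Matrix.mulVec_transpose, Matrix.mulVec_mulVec, M8_gram, Matrix.zero_mulVec]
      exact congrFun h2 k
    simp only [hc, Pi.sub_apply, mul_sub, Finset.sum_sub_distrib, h1, hb k, sub_zero]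
  have hAA : ∀ j j' : Fin 24, 12 ≤ (j : ℕ) → 12 ≤ (j' : ℕ) →
      ∑ k, (ZMod.cast (M0 k j) : ZMod 8) * ZMod.cast (M0 k j') = if j' = j then -1 else 0 := by
    decide +kernel
  have hc1 : c = 0 := by
    ext j
    by_cases hj : (j : ℕ) < 12
    · exact hc0 ⟨j, hj⟩
    · have h1 : ∑ k, M8 k j * ∑ j', M8 k j' * c j' = 0 := by simp only [hMc, mul_zero, Finset.sum_const_zero]
      have h2 : ∑ k, M8 k j * ∑ j', M8 k j' * c j' =
          ∑ j', (∑ k, (ZMod.cast (M0 k j) : ZMod 8) * ZMod.cast (M0 k j')) * c j' := by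
        simp only [Finset.mul_sum, Finset.sum_mul]
        rw [Finset.sum_comm]
        exact Finset.sum_congr rfl fun j' _ => Finset.sum_congr rfl fun k _ => by
          rw [M8_apply, M8_apply, mul_assoc]
      rw [h1, Finset.sum_eq_single j] at h2
      · rw [hAA j j (by omega) (by omega), if_pos rfl] at h2
        simpa using h2.symm
      · intro j' _ hne
        by_cases hj' : (j' : ℕ) < 12
        · rw [show c j' = 0 from hc0 ⟨j', hj'⟩, mul_zero]
        · rw [hAA j j' (by omega) (by omega), if_neg hne, zero_mul]
      · simp
  exact sub_eq_zero.mp hc1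

/-- Reduction from modulo 8 to modulo 2. -/
def red82 : ZMod 8 →+* ZMod 2 := ZMod.castHom (by norm_num) (ZMod 2)

lemma red82_eq_one (c : ZMod 8) : red82 c = 1 ↔ c.val % 2 = 1 := by
  have : ∀ c : ZMod 8, (ZMod.cast c : ZMod 2) = 1 ↔ c.val % 2 = 1 := by decide +kernel
  exact this c

/-- The reduction of a dual vector is a Golay codeword. -/
lemma dual_word2 {b : Fin 24 → ZMod 8} (hb : b ∈ dual M0) :
    ∃ q, ∀ j, word2 q j = red82 (b j) := by
  refine ⟨fun i => red82 (b (Fin.castLE (by norm_num) i)), fun j => ?_⟩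
  have h : ∀ c, red82 (red8 c) = red2 c := fun c =>
    congrArg (fun f : ZMod 64 →+* ZMod 2 => f c) (Subsingleton.elim (red82.comp red8) red2)
  conv_rhs => rw [dual_eq hb]
  simp [word2, Matrix.vecMul, dotProduct, h]

lemma word2_par (u : Fin 12 → ZMod 64) (j : Fin 24) : word2 (par u) j = red2 (word u j) :=
  (congrFun (par_vecMul u M0) j).symm

lemma adm_even {c : ZMod 64} {b : ZMod 8} (h : adm c b) (hc : c.val % 2 = 1) : b = 0 := by
  have : ∀ c : ZMod 64, 8 * c = 0 → ¬ c.val % 2 = 1 := by decide +kernel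
  exact h.resolve_right fun h8 => this c h8 hc

lemma wt_mem (p : Fin 12 → ZMod 2) :
    wt p = 0 ∨ wt p = 8 ∨ wt p = 12 ∨ wt p = 16 ∨ wt p = 24 := by
  rcases class_cases p with h | h | h <;> omega

lemma gram_word (u : Fin 12 → ZMod 64) : ∑ j, red8 (word u j) * red8 (word u j) = 0 := by
  have h : ∀ j, red8 (word u j) = Matrix.vecMul (fun k => red8 (u k)) M8 j := by
    intro j; simp [word, Matrix.vecMul, dotProduct]
  simp only [h]
  show Matrix.vecMul _ M8 ⬝ᵥ Matrix.vecMul _ M8 = 0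
  rw [← Matrix.dotProduct_mulVec, ← Matrix.mulVec_transpose M8, Matrix.mulVec_mulVec, M8_gram,
    Matrix.zero_mulVec, dotProduct_zero]

/-- A contributing pair gives disjoint nonzero Golay codewords, the reductions of `c` and `b`. If the
first has weight 12, the second is its complement; then `c` vanishes modulo 8 off the support
of the first, so `∑ c j ^ 2 = 12` modulo 8, against self-orthogonality. -/
theorem D_A_eq_zero {p : Fin 12 → ZMod 2} (hp : wt p = 0 ∨ wt p = 12 ∨ wt p = 24) :
    D (A p) = 0 := by
  rw [A_eq, map_sum]
  refine Finset.sum_eq_zero fun u hu => ?_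
  rw [map_sum]
  refine Finset.sum_eq_zero fun b hb => ?_
  by_contra hne
  obtain ⟨ha, ⟨j0, hj0⟩, ⟨j1, hj1⟩⟩ := term_ne_zero hne
  obtain ⟨q, hq⟩ := dual_word2 hb
  rw [mem_cls] at hu
  have hx : ∀ j, word2 p j = red2 (word u j) := fun j => by rw [← hu, word2_par]
  have hdisj : ∀ j, word2 p j = 1 → word2 q j = 0 := by
    intro j hj
    rw [hx, red2_eq_one] at hj
    rw [hq, adm_even (ha j) hj, map_zero]
  have hp1 : 1 ≤ wt p := Finset.card_pos.mpr ⟨j0, by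
    simp only [Finset.mem_filter, Finset.mem_univ, true_and]; rw [hx, red2_eq_one]; exact hj0.2⟩
  have hq1 : 1 ≤ wt q := Finset.card_pos.mpr ⟨j1, by
    simp only [Finset.mem_filter, Finset.mem_univ, true_and]; rw [hq, red82_eq_one]; exact hj1⟩
  have hadd : wt (p + q) = wt p + wt q := by
    unfold wt
    rw [← Finset.card_union_of_disjoint]
    · congr 1
      ext j
      simp only [Finset.mem_filter, Finset.mem_univ, true_and, Finset.mem_union]
      rw [word2, Matrix.add_vecMul, Pi.add_apply]
      have h2 : ∀ s t : ZMod 2, (s = 1 → t = 0) → (s + t = 1 ↔ s = 1 ∨ t = 1) := by decide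
      exact h2 _ _ (hdisj j)
    · rw [Finset.disjoint_filter]
      intro j _ h1 h2
      rw [hdisj j h1] at h2
      exact absurd h2 (by decide)
  have w1 := wt_mem q
  have w2 := wt_mem (p + q)
  have h12 : wt p = 12 ∧ wt (p + q) = 24 := by omega
  have hall : ∀ j, word2 (p + q) j = 1 := by
    have : (Finset.univ.filter fun j => word2 (p + q) j = 1) = Finset.univ :=
      Finset.eq_univ_of_card _ (by rw [Fintype.card_fin]; exact h12.2)
    intro j
    have hj := Finset.mem_univ j
    rw [← this] at hj
    exact (Finset.mem_filter.mp hj).2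
  have hsq : ∀ j, red8 (word u j) * red8 (word u j) = if word2 p j = 1 then 1 else 0 := by
    intro j
    split_ifs with h
    · rw [hx, red2_eq_one] at h
      have : ∀ c : ZMod 64, c.val % 2 = 1 →
        (ZMod.cast c : ZMod 8) * (ZMod.cast c : ZMod 8) = 1 := by decide +kernel
      exact this _ h
    · have h1 : word2 q j = 1 := by
        have := hall j
        rw [word2, Matrix.add_vecMul, Pi.add_apply] at this
        have hz : ∀ s t : ZMod 2, s + t = 1 → ¬ s = 1 → t = 1 := by decide
        exact hz _ _ this h
      have hb0 : b j ≠ 0 := by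
        intro h0
        rw [hq, h0, map_zero] at h1
        exact absurd h1 (by decide)
      rw [(red8_eq_zero _).mpr ((ha j).resolve_left hb0), mul_zero]
  have hg := gram_word u
  simp only [hsq] at hg
  rw [Finset.sum_boole] at hg
  change ((wt p : ℕ) : ZMod 8) = 0 at hg
  rw [h12.1] at hg
  exact absurd hg (by decide)

/-- The octad which is the support of the Golay codeword with message 1. -/
def oct : Fin 8 → Fin 24 := ![0, 12, 14, 16, 17, 18, 22, 23]

/-- Row combinations of the generator matrix modulo 8 whose restriction to the octad `oct` is twice
a unit vector. -/
def wit : Matrix (Fin 8) (Fin 12) (ZMod 8) :=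
  !![2, 0, 5, 0, 5, 1, 3, 0, 3, 0, 0, 0;
     0, 2, 7, 4, 5, 3, 1, 0, 3, 0, 0, 0;
     0, 2, 3, 0, 7, 5, 1, 0, 1, 0, 0, 0;
     0, 6, 1, 2, 7, 7, 1, 0, 3, 0, 0, 0;
     0, 4, 3, 2, 7, 1, 1, 0, 3, 0, 0, 0;
     0, 2, 5, 6, 7, 7, 5, 0, 1, 0, 0, 0;
     0, 4, 5, 6, 1, 5, 1, 0, 1, 0, 0, 0;
     0, 0, 3, 0, 5, 3, 7, 0, 1, 0, 0, 0]

/-- For the complement of an octad, `b` is supported on the octad; pairing it with the words `wit`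
gives `2 * b j = 0` there, so that no `b j` is odd. -/
theorem D_A_compl : D (A (vec 4094)) = 0 := by
  rw [A_eq, map_sum]
  refine Finset.sum_eq_zero fun u hu => ?_
  rw [map_sum]
  refine Finset.sum_eq_zero fun b hb => ?_
  by_contra hne
  obtain ⟨ha, -, ⟨j1, hj1⟩⟩ := term_ne_zero hne
  rw [mem_cls] at hu
  have hoff : ∀ j, (∀ l, j ≠ oct l) → b j = 0 := by
    intro j hj
    have hx : word2 (vec 4094) j = red2 (word u j) := by rw [← hu, word2_par]
    have h1 : ∀ j : Fin 24, (∀ l, j ≠ oct l) → (act rowsM 4094).testBit j = true := by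
      decide +kernel
    rw [word2_vec] at hx
    simp only [h1 j hj] at hx
    exact adm_even (ha j) ((red2_eq_one _).mp hx.symm)
  obtain ⟨l, rfl⟩ : ∃ l, j1 = oct l := by
    by_contra hn
    push Not at hn
    rw [hoff j1 hn] at hj1
    simp at hj1
  rw [mem_dual] at hb
  have hw : ∀ l j, (∃ l', j = oct l') → ∑ k, wit l k * (ZMod.cast (M0 k j) : ZMod 8) =
      if j = oct l then 2 else 0 := by decide +kernel
  have h1 : ∑ k, wit l k * ∑ j, M8 k j * b j = 0 := by simp only [hb, mul_zero, Finset.sum_const_zero]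
  have h2 : ∑ k, wit l k * ∑ j, M8 k j * b j =
      ∑ j, (∑ k, wit l k * (ZMod.cast (M0 k j) : ZMod 8)) * b j := by
    simp only [Finset.mul_sum, Finset.sum_mul]
    rw [Finset.sum_comm]
    exact Finset.sum_congr rfl fun j' _ => Finset.sum_congr rfl fun k _ => by
      rw [M8_apply, mul_assoc]
  rw [h1, Finset.sum_eq_single (oct l)] at h2
  · rw [hw l _ ⟨l, rfl⟩, if_pos rfl] at h2
    have : ∀ b : ZMod 8, b.val % 2 = 1 → (0 : ZMod 8) ≠ 2 * b := by decide
    exact this _ hj1 h2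
  · intro j _ hne
    by_cases hj : ∃ l', j = oct l'
    · rw [hw l _ hj, if_neg hne, zero_mul]
    · push Not at hj
      rw [hoff j hj, mul_zero]
  · simp

/-! ### Parametrization of the octad class -/

lemma term_mod8 {b : Fin 24 → ZMod 8} (hb : b ∈ dual M0) {u u' : Fin 12 → ZMod 64}
    (h : ∀ k, red8 (u k) = red8 (u' k)) : term (word u) b = term (word u') b := by
  have hex : ∀ x y : ZMod 64, (ZMod.cast x : ZMod 8) = ZMod.cast y → ∃ t, x = y + 8 * t := by
    decide +kernel
  choose t ht using fun k => hex _ _ (h k)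
  have hu : u = u' + (8 : ZMod 64) • t := by ext k; simp [ht k]
  have hd : ∀ k, 8 * ∑ j, M0 k j * up (b j) = 0 := by simpa [dual] using hb
  have hph : phase (word u) b = phase (word u') b := by
    rw [hu, word, phase_add]
    have : ∑ k, ((8 : ZMod 64) • t) k * ∑ j, M0 k j * up (b j) = 0 :=
      Finset.sum_eq_zero fun k _ => by
        rw [Pi.smul_apply, smul_eq_mul, mul_right_comm, hd, zero_mul]
    rw [this, add_zero]
  have hp : ∏ j, w (word u j) (b j) = ∏ j, w (word u' j) (b j) := by
    refine Finset.prod_congr rfl fun j _ => ?_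
    rw [hu, word, Matrix.add_vecMul, Matrix.smul_vecMul, Pi.add_apply, Pi.smul_apply, smul_eq_mul,
      w_add]
  rw [term, term, hph, hp]

lemma eps_mul {k : ZMod 64} (hk : k ∈ units64) (t : ZMod 64) : eps (k * t) = eps t := by
  have h : ∀ k : ZMod 64, k.val % 2 = 1 → ∀ t, (k * t = 0 ↔ t = 0) ∧ (k * t = 32 ↔ t = 32) := by
    decide +kernel
  obtain ⟨h1, h2⟩ := h k (by simpa [units64] using hk) t
  simp only [eps, h1, h2]

lemma up_mem_units {κ : ZMod 8} (hκ : κ.val % 2 = 1) : up κ ∈ units64 := by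
  have : ∀ κ : ZMod 8, κ.val % 2 = 1 → (up κ).val % 2 = 1 := by unfold up; decide +kernel
  simpa [units64] using this κ hκ

/-- The contribution of a message modulo 8 and a dual word. By `term_mod8` the choice of the lift `up`
does not matter for words `b` in the dual. -/
def T (a : Fin 12 → ZMod 8) (b : Fin 24 → ZMod 8) : MvPolynomial (Fin 7) ℚ :=
  term (word fun k => up (a k)) b

lemma T_smul_left {κ : ZMod 8} (hκ : κ.val % 2 = 1) {b : Fin 24 → ZMod 8} (hb : b ∈ dual M0)
    (a : Fin 12 → ZMod 8) : T (κ • a) b = T a b := by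
  have h1 : T (κ • a) b = term (word (up κ • fun k => up (a k))) b :=
    term_mod8 hb fun k => by simp [red8_up]
  have hk := up_mem_units hκ
  have h2 : ∀ c : Fin 24 → ZMod 64, term (up κ • c) b = term c b := by
    intro c
    have hp : ∏ j, w ((up κ • c) j) (b j) = ∏ j, w (c j) (b j) :=
      Finset.prod_congr rfl fun j _ => by rw [Pi.smul_apply, smul_eq_mul, w_mul hk]
    rw [term, term, phase_smul, eps_mul hk, hp]
  rw [h1, T, word, Matrix.smul_vecMul, h2]

lemma term_smul_right {κ : ZMod 8} (hκ : κ.val % 2 = 1) (c : Fin 24 → ZMod 64)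
    (b : Fin 24 → ZMod 8) : term c (κ • b) = term c b := by
  have hz : ∀ κ : ZMod 8, κ.val % 2 = 1 → ∀ b, (κ * b = 0 ↔ b = 0) ∧
      (κ * b).val % 2 = b.val % 2 ∧ ((κ * b).val % 4 = 2 ↔ b.val % 4 = 2) := by decide +kernel
  have hw : ∀ (c : ZMod 64) (b : ZMod 8), w c (κ * b) = w c b := by
    intro c b
    obtain ⟨h1, h2, h3⟩ := hz κ hκ b
    simp only [w, adm, vi, h1, h2, h3]
  have hup : ∀ (κ b : ZMod 8) (c : ZMod 64), 8 * c = 0 → up (κ * b) * c = up κ * (up b * c) := by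
    unfold up; decide +kernel
  have hp : ∏ j, w (c j) ((κ • b) j) = ∏ j, w (c j) (b j) :=
    Finset.prod_congr rfl fun j _ => by rw [Pi.smul_apply, smul_eq_mul, hw]
  rw [term, term, hp]
  by_cases h0 : ∏ j, w (c j) (b j) = 0
  · simp [h0]
  · have hph : phase c (κ • b) = up κ * phase c b := by
      rw [phase, phase, Finset.mul_sum]
      refine Finset.sum_congr rfl fun j _ => ?_
      have hj : w (c j) (b j) ≠ 0 := fun h => h0 (Finset.prod_eq_zero (Finset.mem_univ j) h)
      have ha : adm (c j) (b j) := by by_contra hn; exact hj (by simp [w, hn])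
      rcases ha with ha | ha
      · simp [ha, up]
      · exact hup _ _ _ ha
    rw [hph, eps_mul (up_mem_units hκ)]

/-- The five coordinates outside the octad `oct` and the systematic part; they are free coordinates
for the dual words vanishing on the octad except possibly at its first element `0`. -/
def five : Fin 5 → Fin 24 := ![13, 15, 19, 20, 21]

/-- The matrix whose rows span the dual words modulo 8 that vanish on the octad except possibly in the
coordinate `0`, with an identity block in the coordinates `five`. -/
def H : Matrix (Fin 5) (Fin 24) (ZMod 8) := fun i j =>
  if h : (j : ℕ) < 12 then - ZMod.cast (M0 ⟨j, h⟩ (five i)) else if j = five i then 1 else 0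

/-- The dual word with free coordinates `v`, vanishing on the octad except possibly in the coordinate
`0`; there it vanishes for the words that contribute. -/
def bvec (v : Fin 5 → ZMod 8) : Fin 24 → ZMod 8 := Matrix.vecMul v H

lemma bvec_mem (v : Fin 5 → ZMod 8) : bvec v ∈ dual M0 := by
  have h : ∀ k i, ∑ j, (ZMod.cast (M0 k j) : ZMod 8) * H i j = 0 := by decide +kernel
  have h' : M8 * H.transpose = 0 := by
    ext k i; exact h k i
  rw [mem_dual]
  have h2 : Matrix.mulVec M8 (bvec v) = 0 := by
    rw [bvec, ← Matrix.mulVec_transpose, Matrix.mulVec_mulVec, h', Matrix.zero_mulVec]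
  exact congrFun h2

lemma bvec_five (v : Fin 5 → ZMod 8) (i : Fin 5) : bvec v (five i) = v i := by
  have h : ∀ i' i, H i' (five i) = if i' = i then 1 else 0 := by decide +kernel
  simp [bvec, Matrix.vecMul, dotProduct, h]

lemma bvec_smul (κ : ZMod 8) (v : Fin 5 → ZMod 8) : bvec (κ • v) = κ • bvec v := by
  rw [bvec, Matrix.smul_vecMul]; rfl

lemma eq_bvec {b : Fin 24 → ZMod 8} (hb : b ∈ dual M0) (h0 : ∀ l, b (oct l) = 0) :
    b = bvec fun i => b (five i) := by
  set v : Fin 5 → ZMod 8 := fun i => b (five i) with hv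
  have hd1 := mem_dual.mp (bvec_mem v)
  rw [mem_dual] at hb
  have hlast : ∀ j : Fin 24, 12 ≤ (j : ℕ) → b j = bvec v j := by
    intro j hj
    have hcase : ∀ j : Fin 24, 12 ≤ (j : ℕ) → (∃ i, j = five i) ∨ ((∃ l, j = oct l) ∧
      ∀ i, H i j = 0) := by decide +kernel
    rcases hcase j hj with ⟨i, rfl⟩ | ⟨⟨l, rfl⟩, h⟩
    · rw [bvec_five]
    · rw [h0]; simp [bvec, Matrix.vecMul, dotProduct, h]
  ext j
  by_cases hj : (j : ℕ) < 12
  · have hI : ∀ (k : Fin 12) (j : Fin 24), (j : ℕ) < 12 →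
        (ZMod.cast (M0 k j) : ZMod 8) = if (j : ℕ) = k then 1 else 0 := by decide +kernel
    have h1 : ∑ j', M8 ⟨j, hj⟩ j' * (b j' - bvec v j') = 0 := by
      simp only [mul_sub, Finset.sum_sub_distrib, hb, hd1, sub_self]
    rw [Finset.sum_eq_single j] at h1
    · rw [M8_apply, hI _ _ hj, if_pos rfl, one_mul, sub_eq_zero] at h1
      exact h1
    · intro j' _ hne
      by_cases hj' : (j' : ℕ) < 12
      · rw [M8_apply, hI _ _ hj', if_neg (fun h => hne (Fin.ext h)), zero_mul]
      · rw [hlast j' (by omega), sub_self, mul_zero]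
    · simp
  · exact hlast j (by omega)

/-- If an involutive scaling by the odd residues preserves `h` and multiplies `φ` by the scalar, the sum
over odd values of `φ` is four times the sum over the value 1. -/
lemma sum_scale {α : Type*} [Fintype α] (sc : ZMod 8 → α → α) (φ : α → ZMod 8)
    (h : α → MvPolynomial (Fin 7) ℚ)
    (hsc : ∀ κ : ZMod 8, κ.val % 2 = 1 → ∀ x, sc κ (sc κ x) = x ∧ φ (sc κ x) = κ * φ x ∧
      h (sc κ x) = h x) :
    ∑ x, (if (φ x).val % 2 = 1 then h x else 0) = 4 * ∑ x, if φ x = 1 then h x else 0 := by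
  have hk : ∀ κ : ZMod 8, κ.val % 2 = 1 →
      ∑ x, (if φ x = κ then h x else 0) = ∑ x, if φ x = 1 then h x else 0 := by
    intro κ hκ
    have hinv : Function.Involutive (sc κ) := fun x => (hsc κ hκ x).1
    rw [← Equiv.sum_comp hinv.toPerm]
    refine Finset.sum_congr rfl fun x _ => ?_
    obtain ⟨-, h2, h3⟩ := hsc κ hκ x
    have hc : ∀ κ : ZMod 8, κ.val % 2 = 1 → ∀ y, (κ * y = κ ↔ y = 1) := by decide +kernel
    simp only [Function.Involutive.coe_toPerm, h2, h3, hc κ hκ]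
  have hsplit : ∀ x, (if (φ x).val % 2 = 1 then h x else 0) =
      (if φ x = 1 then h x else 0) + (if φ x = 3 then h x else 0) +
      (if φ x = 5 then h x else 0) + (if φ x = 7 then h x else 0) := by
    intro x
    generalize φ x = y
    generalize h x = z
    have : ∀ y : ZMod 8, (y.val % 2 = 1 ↔ y = 1 ∨ y = 3 ∨ y = 5 ∨ y = 7) ∧
        (y = 1 → y ≠ 3 ∧ y ≠ 5 ∧ y ≠ 7) ∧ (y = 3 → y ≠ 5 ∧ y ≠ 7) ∧ (y = 5 → y ≠ 7) := by
      decide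
    obtain ⟨h1, h2, h3, h4⟩ := this y
    rw [if_congr h1 rfl rfl]
    by_cases e1 : y = 1
    · obtain ⟨a, b, c⟩ := h2 e1
      rw [if_pos (Or.inl e1), if_pos e1, if_neg a, if_neg b, if_neg c]; simp
    rw [if_neg e1]
    by_cases e3 : y = 3
    · obtain ⟨a, b⟩ := h3 e3
      rw [if_pos (Or.inr (Or.inl e3)), if_pos e3, if_neg a, if_neg b]; simp
    rw [if_neg e3]
    by_cases e5 : y = 5
    · rw [if_pos (Or.inr (Or.inr (Or.inl e5))), if_pos e5, if_neg (h4 e5)]; simp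
    rw [if_neg e5]
    simp [e1, e3, e5]
  simp only [hsplit, Finset.sum_add_distrib]
  rw [hk 3 (by decide), hk 5 (by decide), hk 7 (by decide)]
  ring

set_option maxRecDepth 8000

lemma sum_red8 (h : (Fin 12 → ZMod 8) → MvPolynomial (Fin 7) ℚ) :
    ∑ u : Fin 12 → ZMod 64, h (fun k => red8 (u k)) = 8 ^ 12 * ∑ a, h a := by
  have hc : ∀ a : ZMod 8, (Finset.univ.filter fun x : ZMod 64 => red8 x = a).card = 8 := by
    have : ∀ a : ZMod 8, (Finset.univ.filter fun x : ZMod 64 => (ZMod.cast x : ZMod 8) = a).card = 8 := by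
      intro a
      have h2 : ∀ a : ZMod 8, ∑ x : ZMod 64, (if (ZMod.cast x : ZMod 8) = a then 1 else 0) = 8 := by
        decide +kernel
      rw [Finset.card_filter]
      convert h2 a
    exact this
  rw [← Finset.sum_fiberwise Finset.univ (fun (u : Fin 12 → ZMod 64) => fun k => red8 (u k)),
    Finset.mul_sum]
  refine Finset.sum_congr rfl fun a _ => ?_
  have hf : (Finset.univ.filter fun u : Fin 12 → ZMod 64 => (fun k => red8 (u k)) = a) =
      Fintype.piFinset fun k => Finset.univ.filter fun x : ZMod 64 => red8 x = a k := by
    ext u; simp [funext_iff]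
  rw [Finset.sum_congr rfl (g := fun _ => h a) (fun u hu => by rw [(Finset.mem_filter.mp hu).2]),
    Finset.sum_const, hf, Fintype.card_piFinset]
  simp only [hc]
  simp
  norm_num

/-- The first odd entry of `v`, and `0` if there is none. -/
def lead (v : Fin 5 → ZMod 8) : ZMod 8 :=
  if (v 0).val % 2 = 1 then v 0 else if (v 1).val % 2 = 1 then v 1 else
  if (v 2).val % 2 = 1 then v 2 else if (v 3).val % 2 = 1 then v 3 else
  if (v 4).val % 2 = 1 then v 4 else 0

lemma lead_odd (v : Fin 5 → ZMod 8) : (lead v).val % 2 = 1 ↔ ∃ i, (v i).val % 2 = 1 := by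
  unfold lead
  simp only [Fin.exists_fin_succ]
  split_ifs <;> simp_all

lemma lead_smul {κ : ZMod 8} (hκ : κ.val % 2 = 1) (v : Fin 5 → ZMod 8) :
    lead (κ • v) = κ * lead v := by
  have h : ∀ κ : ZMod 8, κ.val % 2 = 1 → ∀ x, ((κ * x).val % 2 = 1 ↔ x.val % 2 = 1) := by decide
  unfold lead
  simp only [Pi.smul_apply, smul_eq_mul, h κ hκ]
  split_ifs <;> simp

lemma odd_oct {u : Fin 12 → ZMod 64} (hu : u ∈ cls (vec 1)) (l : Fin 8) :
    (word u (oct l)).val % 2 = 1 := by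
  rw [← red2_eq_one, ← word2_par, mem_cls.mp hu, word2_vec]
  have h : ∀ l, bit2 ((act rowsM 1).testBit (oct l)) = 1 := by decide +kernel
  exact h l

lemma bvec_even {v : Fin 5 → ZMod 8} (hv : ¬ ∃ i, (v i).val % 2 = 1) (j : Fin 24) :
    ¬ (bvec v j).val % 2 = 1 := by
  push Not at hv
  rw [← red82_eq_one, bvec, Matrix.vecMul, dotProduct, map_sum]
  have : ∀ x : ZMod 8, x.val % 2 ≠ 1 → red82 x = 0 := by
    have : ∀ x : ZMod 8, x.val % 2 ≠ 1 → (ZMod.cast x : ZMod 2) = 0 := by decide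
    exact this
  rw [Finset.sum_eq_zero fun i _ => by rw [map_mul, this _ (hv i), zero_mul]]
  decide

lemma bvec_oct (v : Fin 5 → ZMod 8) {u : Fin 12 → ZMod 64} (hu : u ∈ cls (vec 1))
    (h : ∀ j, adm (word u j) (bvec v j)) (l : Fin 8) : bvec v (oct l) = 0 :=
  adm_even (h _) (odd_oct hu l)

/-- For a codeword reducing to the octad, the contributing dual words are the `bvec v` with an odd
entry in `v`. -/
lemma sum_dual {u : Fin 12 → ZMod 64} (hu : u ∈ cls (vec 1)) :
    ∑ b ∈ dual M0, D (term (word u) b) =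
      ∑ v, if (lead v).val % 2 = 1 then T (fun k => red8 (u k)) (bvec v) else 0 := by
  have hinj : Function.Injective bvec := fun v v' h => by
    ext i; rw [← bvec_five v, ← bvec_five v', h]
  have h1 : ∑ b ∈ Finset.univ.image bvec, D (term (word u) b) =
      ∑ b ∈ dual M0, D (term (word u) b) := by
    refine Finset.sum_subset (fun b hb => ?_) (fun b hb hn => ?_)
    · obtain ⟨v, -, rfl⟩ := Finset.mem_image.mp hb
      exact bvec_mem v
    · by_contra h0
      obtain ⟨ha, -, -⟩ := term_ne_zero h0
      exact hn (Finset.mem_image.mpr ⟨_, Finset.mem_univ _,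
        (eq_bvec hb fun l => adm_even (ha _) (odd_oct hu l)).symm⟩)
  rw [← h1, Finset.sum_image (fun _ _ _ _ h => hinj h)]
  refine Finset.sum_congr rfl fun v _ => ?_
  have hT : T (fun k => red8 (u k)) (bvec v) = term (word u) (bvec v) :=
    term_mod8 (bvec_mem v) fun k => red8_up _
  rw [hT]
  by_cases hv : ∃ i, (v i).val % 2 = 1
  · rw [if_pos ((lead_odd v).mpr hv)]
    by_cases ha : ∀ j, adm (word u j) (bvec v j)
    · obtain ⟨i, hi⟩ := hv
      exact D_term ⟨_, bvec_oct v hu ha 0, odd_oct hu 0⟩ ⟨five i, by rw [bvec_five]; exact hi⟩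
    · push Not at ha
      obtain ⟨j, hj⟩ := ha
      rw [term, Finset.prod_eq_zero (Finset.mem_univ j) (by simp [w, hj]), smul_zero, map_zero]
  · rw [if_neg (fun h => hv ((lead_odd v).mp h))]
    by_contra h0
    obtain ⟨-, -, j, hj⟩ := term_ne_zero h0
    exact bvec_even hv j hj

/-- The octad class as a finite sum modulo 8: the factor `8 ^ 12` counts lifts of messages from
modulo 8 to modulo 64, and each factor 4 of `16 = 4 * 4` comes from normalizing by odd scalars,
one for the message (`a 0 = 1`) and one for the dual word (`lead v = 1`). -/
theorem D_A_rep : D (A (vec 1)) = 8 ^ 12 * 16 * ∑ v : Fin 5 → ZMod 8, if lead v = 1 then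
    ∑ a : Fin 11 → ZMod 8, if ∀ k, (a k).val % 2 = 0 then T (Fin.cons 1 a) (bvec v) else 0
    else 0 := by
  have hsq : ∀ κ : ZMod 8, κ.val % 2 = 1 → ∀ x, κ * (κ * x) = x := by decide
  have hodd : ∀ κ : ZMod 8, κ.val % 2 = 1 → ∀ x, ((κ * x).val % 2 = 0 ↔ x.val % 2 = 0) := by decide
  have hpar : ∀ u : Fin 12 → ZMod 64, u ∈ cls (vec 1) ↔
      (red8 (u 0)).val % 2 = 1 ∧ ∀ k : Fin 11, (red8 (u k.succ)).val % 2 = 0 := by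
    intro u
    have h1 : ∀ x : ZMod 64, red2 x = 1 ↔ (red8 x).val % 2 = 1 := by
      have : ∀ x : ZMod 64, (ZMod.cast x : ZMod 2) = 1 ↔ (ZMod.cast x : ZMod 8).val % 2 = 1 := by
        decide +kernel
      exact this
    have h0 : ∀ x : ZMod 64, red2 x = 0 ↔ (red8 x).val % 2 = 0 := by
      have : ∀ x : ZMod 64, (ZMod.cast x : ZMod 2) = 0 ↔ (ZMod.cast x : ZMod 8).val % 2 = 0 := by
        decide +kernel
      exact this
    have e0 : vec 1 0 = 1 := by decide
    have e1 : ∀ k : Fin 11, vec 1 k.succ = 0 := by decide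
    rw [mem_cls, funext_iff, Fin.forall_fin_succ]
    simp only [par, e0, e1, h1, h0]
  have hstep1 : D (A (vec 1)) = ∑ u : Fin 12 → ZMod 64,
      (fun a : Fin 12 → ZMod 8 => if (a 0).val % 2 = 1 ∧ ∀ k : Fin 11, (a k.succ).val % 2 = 0 then
        ∑ v, if (lead v).val % 2 = 1 then T a (bvec v) else 0 else 0) (fun k => red8 (u k)) := by
    rw [A_eq, map_sum, cls, Finset.sum_filter]
    refine Finset.sum_congr rfl fun u _ => ?_
    beta_reduce
    rw [if_congr (hpar u).symm rfl rfl, if_congr mem_cls.symm rfl rfl]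
    split_ifs with hu
    · rw [map_sum, sum_dual hu]
    · rfl
  have hv : ∀ a : Fin 12 → ZMod 8, (∑ v, if (lead v).val % 2 = 1 then T a (bvec v) else 0) =
      4 * ∑ v, if lead v = 1 then T a (bvec v) else 0 := by
    intro a
    refine sum_scale (fun κ v => κ • v) lead (fun v => T a (bvec v)) fun κ hκ v => ⟨?_, ?_, ?_⟩
    · ext i; simp [hsq κ hκ]
    · exact lead_smul hκ v
    · rw [bvec_smul, T, T, term_smul_right hκ]
  have hstep2 : (∑ a : Fin 12 → ZMod 8,
      if (a 0).val % 2 = 1 ∧ ∀ k : Fin 11, (a k.succ).val % 2 = 0 then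
        ∑ v, (if (lead v).val % 2 = 1 then T a (bvec v) else 0) else 0) =
      4 * ∑ a : Fin 12 → ZMod 8, if a 0 = 1 then
        (if ∀ k : Fin 11, (a k.succ).val % 2 = 0 then
        ∑ v, (if (lead v).val % 2 = 1 then T a (bvec v) else 0) else 0) else 0 := by
    rw [← sum_scale (fun κ a => κ • a) (fun a : Fin 12 → ZMod 8 => a 0)
      (fun a => if ∀ k : Fin 11, (a k.succ).val % 2 = 0 then
        ∑ v, (if (lead v).val % 2 = 1 then T a (bvec v) else 0) else 0)]
    · simp only [ite_and]
    · intro κ hκ a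
      refine ⟨?_, ?_, ?_⟩
      · ext i; simp [hsq κ hκ]
      · simp
      · simp only [Pi.smul_apply, smul_eq_mul, hodd κ hκ, T_smul_left hκ (bvec_mem _)]
  rw [hstep1, sum_red8 (fun a : Fin 12 → ZMod 8 => if (a 0).val % 2 = 1 ∧ ∀ k : Fin 11, (a k.succ).val % 2 = 0 then
        ∑ v, if (lead v).val % 2 = 1 then T a (bvec v) else 0 else 0)]
  rw [hstep2, ← (Fin.consEquiv fun _ => ZMod 8).sum_comp, Fintype.sum_prod_type]
  simp only [Fin.consEquiv_apply, Fin.cons_zero, Fin.cons_succ, hv]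
  rw [Finset.sum_eq_single (1 : ZMod 8) (fun x _ hx => by simp [hx]) (by simp)]
  simp only [if_true]
  have hsw : (∑ v : Fin 5 → ZMod 8, if lead v = 1 then
      ∑ a : Fin 11 → ZMod 8, if ∀ k, (a k).val % 2 = 0 then T (Fin.cons 1 a) (bvec v) else 0
      else 0) = ∑ a : Fin 11 → ZMod 8, if ∀ k, (a k).val % 2 = 0 then
        ∑ v : Fin 5 → ZMod 8, (if lead v = 1 then T (Fin.cons 1 a) (bvec v) else 0) else 0 := by
    simp only [← Finset.sum_filter]
    rw [Finset.sum_comm]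
  have hcons : ∀ x : Fin 11 → ZMod 8, (Fin.consEquiv fun _ : Fin 12 => ZMod 8) (1, x) = Fin.cons 1 x :=
    fun x => rfl
  simp only [hcons]
  rw [hsw]
  have : ∀ a : Fin 11 → ZMod 8, (if ∀ k, (a k).val % 2 = 0 then
        4 * ∑ v : Fin 5 → ZMod 8, (if lead v = 1 then T (Fin.cons 1 a) (bvec v) else 0) else 0) =
      4 * (if ∀ k, (a k).val % 2 = 0 then
        ∑ v : Fin 5 → ZMod 8, (if lead v = 1 then T (Fin.cons 1 a) (bvec v) else 0) else 0) := by
    intro a; split_ifs <;> simp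
  rw [Finset.sum_congr rfl fun a _ => this a, ← Finset.mul_sum]
  ring

/-! ### Monomials as natural numbers and the search -/

/-- The variable (or sign) encoded by a prime: `x₀, x₁, x₂, y₀, y₁, y₂, z` are encoded by
2, 3, 5, 7, 11, 13, 17, and a minus sign by 19. -/
def gen (p : ℕ) : MvPolynomial (Fin 7) ℚ :=
  if p = 2 then X 0 else if p = 3 then X 1 else if p = 5 then X 2 else if p = 7 then X 3 else
  if p = 11 then X 4 else if p = 13 then X 5 else if p = 17 then X 6 else if p = 19 then -1 else 1

/-- The signed monomial encoded by a natural number, by multiplicativity in the prime factors. -/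
def val : ℕ →*₀ MvPolynomial (Fin 7) ℚ where
  toFun n := if n = 0 then 0 else (n.primeFactorsList.map gen).prod
  map_zero' := by simp
  map_one' := by simp
  map_mul' a b := by
    by_cases ha : a = 0
    · simp [ha]
    by_cases hb : b = 0
    · simp [hb]
    rw [if_neg ha, if_neg hb, if_neg (mul_ne_zero ha hb),
      ((Nat.perm_primeFactorsList_mul ha hb).map gen).prod_eq, List.map_append, List.prod_append]

lemma val_prime {p : ℕ} (hp : p.Prime) : val p = gen p := by
  show (if p = 0 then 0 else (p.primeFactorsList.map gen).prod) = gen p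
  rw [if_neg hp.ne_zero, Nat.primeFactorsList_prime hp]
  simp

lemma val_two : val 2 = X 0 := by rw [val_prime (by norm_num)]; simp [gen]
lemma val_three : val 3 = X 1 := by rw [val_prime (by norm_num)]; simp [gen]
lemma val_five : val 5 = X 2 := by rw [val_prime (by norm_num)]; simp [gen]
lemma val_seven : val 7 = X 3 := by rw [val_prime (by norm_num)]; simp [gen]
lemma val_eleven : val 11 = X 4 := by rw [val_prime (by norm_num)]; simp [gen]
lemma val_thirteen : val 13 = X 5 := by rw [val_prime (by norm_num)]; simp [gen]
lemma val_seventeen : val 17 = X 6 := by rw [val_prime (by norm_num)]; simp [gen]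
lemma val_nineteen : val 19 = -1 := by rw [val_prime (by norm_num)]; simp [gen]

/-- The polynomial encoded by a list of monomial codes. -/
def S (l : List ℕ) : MvPolynomial (Fin 7) ℚ := (l.map val).sum

lemma S_cons (n : ℕ) (l : List ℕ) : S (n :: l) = val n + S l := by simp [S]

/-- The code of the variable `vi c b` for `b ≠ 0`. -/
def pb (b : ℕ) : ℕ := cond (Nat.beq (b % 2) 1) 7 (cond (Nat.beq (b % 4) 2) 11 13)
/-- The code of the variable `vi a 0`. -/
def pa (a : ℕ) : ℕ := cond (Nat.beq (a % 2) 1) 2 (cond (Nat.beq (a % 4) 2) 3 (cond (Nat.beq (a % 8) 4) 5 17))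

/-- The code of the variable `vi c v`. -/
def pc (v c : ℕ) : ℕ := cond (Nat.beq v 0) (pa c) (pb v)
/-- Admissibility of `(c, v)` for `q = 8`, and a necessary condition for it if `q` divides 8. -/
def ok (v c q : ℕ) : Bool := cond (Nat.beq v 0) true (Nat.beq (c % q) 0)


/-- The condition `ok` in the five coordinates. -/
def chk (q v0 v1 v2 v3 v4 c0 c1 c2 c3 c4 : ℕ) : Bool :=
  cond (ok v0 c0 q) (cond (ok v1 c1 q) (cond (ok v2 c2 q) (cond (ok v3 c3 q) (ok v4 c4 q) false) false) false) false

/-- Adds the monomial `code` to the list with the sign `eps ph`. -/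
def emit (ph code : ℕ) (acc : List ℕ) : List ℕ :=
  cond (Nat.beq (ph % 64) 0) (code :: acc) (cond (Nat.beq (ph % 64) 32) (19 * code :: acc) acc)

/-- Completes the partial monomial `key` by the variables of the five coordinates `five`, in which the
codeword is `c0, …, c4` and the dual word is `v0, …, v4`, and adds the result with its sign. -/
def leaf (v0 v1 v2 v3 v4 c0 c1 c2 c3 c4 key : ℕ) (acc : List ℕ) : List ℕ :=
  cond (chk 8 v0 v1 v2 v3 v4 c0 c1 c2 c3 c4)
   (emit (v0 * c0 + v1 * c1 + v2 * c2 + v3 * c3 + v4 * c4)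
     (key * (pc v0 c0 * (pc v1 c1 * (pc v2 c2 * (pc v3 c3 * pc v4 c4))))) acc) acc

/-- A row of the generator matrix restricted to the five coordinates. -/
inductive Row | mk (r0 r1 r2 r3 r4 : ℕ)
/-- A row together with the multiple `t` (0 or 2) of it that has already been added. -/
inductive Tag | mk (t r0 r1 r2 r3 r4 : ℕ)

/-- The second stage of the enumeration of messages: each tagged row is added 0 or 4 times more, and
the variable of the resulting message entry is recorded in `key`. Recursors and continuations
are used here and below for fast evaluation in the kernel. -/
def dfs2 (lf : ℕ → ℕ → ℕ → ℕ → ℕ → ℕ → List ℕ → List ℕ) (rows : List Tag) :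
    ℕ → ℕ → ℕ → ℕ → ℕ → ℕ → List ℕ → List ℕ :=
  List.rec (motive := fun _ => ℕ → ℕ → ℕ → ℕ → ℕ → ℕ → List ℕ → List ℕ) lf
    (fun x _ ih c0 c1 c2 c3 c4 key acc =>
      Tag.rec (motive := fun _ => List ℕ) (fun t r0 r1 r2 r3 r4 =>
      ih c0 c1 c2 c3 c4 (key * pa t)
        (ih (c0 + 4 * r0) (c1 + 4 * r1) (c2 + 4 * r2) (c3 + 4 * r3) (c4 + 4 * r4) (key * pa (t+4)) acc)) x) rows

/-- The first stage of the enumeration of messages: each row is added 0 or 2 times, which fixes the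
message modulo 4. -/
def dfs1 (lf : ℕ → ℕ → ℕ → ℕ → ℕ → List Tag → List ℕ → List ℕ) (rows : List Row) :
    ℕ → ℕ → ℕ → ℕ → ℕ → List Tag → List ℕ → List ℕ :=
  List.rec (motive := fun _ => ℕ → ℕ → ℕ → ℕ → ℕ → List Tag → List ℕ → List ℕ) lf
    (fun x _ ih c0 c1 c2 c3 c4 tags acc =>
      Row.rec (motive := fun _ => List ℕ) (fun r0 r1 r2 r3 r4 =>
      ih c0 c1 c2 c3 c4 (Tag.mk 0 r0 r1 r2 r3 r4 :: tags)
        (ih (c0 + 2 * r0) (c1 + 2 * r1) (c2 + 2 * r2) (c3 + 2 * r3) (c4 + 2 * r4) (Tag.mk 2 r0 r1 r2 r3 r4 :: tags) acc)) x) rows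

/-- Computes, for each row, the dual word in the corresponding systematic coordinate (up to sign, which
does not affect the variable). If it is zero, the row is kept in `K` for the enumeration; otherwise
the message entry must vanish, and the variable of the dual coordinate is recorded in `key`. -/
def prep (v0 v1 v2 v3 v4 : ℕ) (rows : List Row) : (ℕ → List Row → List ℕ) → ℕ → List Row → List ℕ :=
  List.rec (motive := fun _ => (ℕ → List Row → List ℕ) → ℕ → List Row → List ℕ) (fun k => k)
    (fun x _ ih k key K => Row.rec (motive := fun _ => List ℕ) (fun r0 r1 r2 r3 r4 =>
      (fun b => cond (Nat.beq (b % 8) 0) (ih k key (x :: K)) (ih k (key * pb b) K))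
        (v0 * r0 + v1 * r1 + v2 * r2 + v3 * r3 + v4 * r4)) x) rows

/-- The list of contributions for the dual word `bvec v`. The initial state `22, 4, 38, 60, 20` is the
first row of the generator matrix in the five coordinates, and `256 = 2 ^ 8` encodes `x₀ ^ 8`, coming
from the octad. The initial condition says that the dual word vanishes in the first coordinate.
Branches which already fail to be admissible modulo 4 are cut. -/
def perV (rows : List Row) (v0 v1 v2 v3 v4 : ℕ) (acc : List ℕ) : List ℕ :=
  cond (Nat.beq ((v0 * 22 + v1 * 4 + v2 * 38 + v3 * 60 + v4 * 20) % 8) 0)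
   (prep v0 v1 v2 v3 v4 rows (fun key K =>
     dfs1 (fun c0 c1 c2 c3 c4 tags acc => cond (chk 4 v0 v1 v2 v3 v4 c0 c1 c2 c3 c4)
        (dfs2 (leaf v0 v1 v2 v3 v4) tags c0 c1 c2 c3 c4 key acc) acc) K 22 4 38 60 20 [] acc) 256 []) acc

/-- Iteration over all the residues modulo 8. -/
def all8 (f : ℕ → List ℕ → List ℕ) (acc : List ℕ) : List ℕ := f 0 (f 1 (f 2 (f 3 (f 4 (f 5 (f 6 (f 7 acc)))))))
/-- Iteration over the even residues modulo 8. -/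
def even8 (f : ℕ → List ℕ → List ℕ) (acc : List ℕ) : List ℕ := f 0 (f 2 (f 4 (f 6 acc)))

/-- The list of contributions of all the dual words `bvec v` with `lead v = 1`. -/
def run (rows : List Row) : List ℕ :=
  all8 (fun v1 => all8 fun v2 => all8 fun v3 => all8 fun v4 => perV rows 1 v1 v2 v3 v4) (
  even8 (fun v0 => all8 (fun v2 => all8 fun v3 => all8 fun v4 => perV rows v0 1 v2 v3 v4)) (
  even8 (fun v0 => even8 (fun v1 => all8 fun v3 => all8 fun v4 => perV rows v0 v1 1 v3 v4)) (
  even8 (fun v0 => even8 (fun v1 => even8 fun v2 => all8 fun v4 => perV rows v0 v1 v2 1 v4)) (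
  even8 (fun v0 => even8 (fun v1 => even8 fun v2 => even8 fun v3 => perV rows v0 v1 v2 v3 1)) []))))
/-- The rows of the generator matrix other than the first, restricted to the coordinates `five`. -/
def rowsA : List Row := [⟨5, 61, 39, 2, 48⟩, ⟨21, 11, 28, 51, 6⟩, ⟨17, 14, 53, 8, 23⟩, ⟨37, 62, 9, 25, 20⟩, ⟨57, 48, 6, 41, 57⟩, ⟨0, 13, 15, 54, 57⟩, ⟨46, 9, 55, 35, 18⟩, ⟨49, 27, 33, 15, 43⟩, ⟨6, 40, 37, 1, 47⟩, ⟨22, 13, 4, 49, 5⟩, ⟨39, 19, 4, 44, 41⟩]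

lemma cond_eq {α : Type*} (b : Bool) (x y : α) : cond b x y = if b = true then x else y := by
  cases b <;> rfl

lemma val_pa (c : ℕ) : val (pa c) = X (vi (c : ZMod 64) 0) := by
  have h2 : (c % 64) % 2 = c % 2 := by omega
  have h4 : (c % 64) % 4 = c % 4 := by omega
  have h8 : (c % 64) % 8 = c % 8 := by omega
  unfold pa vi
  simp only [if_true, ZMod.val_natCast, h2, h4, h8, cond_eq, Nat.beq_eq]
  split_ifs <;> simp [val_two, val_three, val_five, val_seventeen]

lemma val_pb (b : ℕ) (hb : b % 8 ≠ 0) (c : ZMod 64) : val (pb b) = X (vi c (b : ZMod 8)) := by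
  have h2 : (b % 8) % 2 = b % 2 := by omega
  have h4 : (b % 8) % 4 = b % 4 := by omega
  have h0 : (b : ZMod 8) ≠ 0 := by
    rw [ne_eq, ZMod.natCast_eq_zero_iff]; omega
  unfold pb vi
  simp only [if_neg h0, ZMod.val_natCast, h2, h4, cond_eq, Nat.beq_eq]
  split_ifs <;> simp [val_seven, val_eleven, val_thirteen]

/-- The state of the search: the codeword in the coordinates `five`, built from natural numbers. -/
def st (c0 c1 c2 c3 c4 : ℕ) : Fin 5 → ZMod 64 := ![c0, c1, c2, c3, c4]

/-- The part of a contribution that depends on the coordinates `five`. -/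
def L (v : Fin 5 → ZMod 8) (c : Fin 5 → ZMod 64) : MvPolynomial (Fin 7) ℚ :=
  eps (∑ i, up (v i) * c i) • ∏ i, w (c i) (v i)

lemma ok_iff (v : ZMod 8) (c : ℕ) : ok v.val c 8 = true ↔ adm (c : ZMod 64) v := by
  have h : (8 * (c : ZMod 64) = 0) ↔ c % 8 = 0 := by
    have : (8 * (c : ZMod 64)) = ((8 * c : ℕ) : ZMod 64) := by push_cast; rfl
    rw [this, ZMod.natCast_eq_zero_iff]; omega
  unfold ok adm
  simp only [h, cond_eq, Nat.beq_eq, ZMod.val_eq_zero]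
  split_ifs with h0 <;> simp [h0]

lemma w_pc {v : ZMod 8} {c : ℕ} (h : adm (c : ZMod 64) v) :
    w (c : ZMod 64) v = val (pc v.val c) := by
  rw [w, if_pos h, pc]
  simp only [cond_eq, Nat.beq_eq, ZMod.val_eq_zero]
  split_ifs with h0
  · rw [h0, val_pa]
  · rw [val_pb _ _ (c : ZMod 64), ZMod.natCast_zmod_val]
    rw [Nat.mod_eq_of_lt (ZMod.val_lt v), ne_eq, ZMod.val_eq_zero]; exact h0

lemma chk_iff (v : Fin 5 → ZMod 8) (c0 c1 c2 c3 c4 q : ℕ) :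
    chk q (v 0).val (v 1).val (v 2).val (v 3).val (v 4).val c0 c1 c2 c3 c4 = true ↔
      ok (v 0).val c0 q = true ∧ ok (v 1).val c1 q = true ∧ ok (v 2).val c2 q = true ∧
      ok (v 3).val c3 q = true ∧ ok (v 4).val c4 q = true := by
  unfold chk
  simp only [cond_eq]
  split_ifs <;> simp_all

lemma S_emit (ph code : ℕ) (acc : List ℕ) :
    S (emit ph code acc) = eps (ph : ZMod 64) • val code + S acc := by
  have h0 : (ph : ZMod 64) = 0 ↔ ph % 64 = 0 := by
    rw [ZMod.natCast_eq_zero_iff]; omega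
  have h32 : (ph : ZMod 64) = 32 ↔ ph % 64 = 32 := by
    have := ZMod.natCast_eq_natCast_iff' ph 32 64
    exact this
  unfold emit eps
  simp only [cond_eq, Nat.beq_eq, h0, h32]
  split_ifs
  · rw [S_cons, one_smul]
  · rw [S_cons, map_mul, val_nineteen]; simp
  · simp

lemma S_leaf (v : Fin 5 → ZMod 8) (c0 c1 c2 c3 c4 key : ℕ) (acc : List ℕ) :
    S (leaf (v 0).val (v 1).val (v 2).val (v 3).val (v 4).val c0 c1 c2 c3 c4 key acc) =
      val key * L v (st c0 c1 c2 c3 c4) + S acc := by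
  unfold leaf L
  simp only [cond_eq, chk_iff, ok_iff]
  simp only [Fin.prod_univ_five, Fin.sum_univ_five, st, Matrix.cons_val]
  split_ifs with h
  · obtain ⟨h0, h1, h2, h3, h4⟩ := h
    rw [S_emit, w_pc h0, w_pc h1, w_pc h2, w_pc h3, w_pc h4]
    simp only [up, map_mul]
    push_cast
    rw [mul_smul_comm]
    congr 2
    ring
  · have : w (c0 : ZMod 64) (v 0) * w (c1 : ZMod 64) (v 1) * w (c2 : ZMod 64) (v 2) *
        w (c3 : ZMod 64) (v 3) * w (c4 : ZMod 64) (v 4) = 0 := by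
      by_contra hn
      apply h
      simp only [mul_eq_zero, not_or] at hn
      obtain ⟨⟨⟨⟨h0, h1⟩, h2⟩, h3⟩, h4⟩ := hn
      have ha : ∀ (c : ZMod 64) b, w c b ≠ 0 → adm c b := by
        intro c b hw; by_contra hh; exact hw (by simp [w, hh])
      exact ⟨ha _ _ h0, ha _ _ h1, ha _ _ h2, ha _ _ h3, ha _ _ h4⟩
    rw [this, smul_zero, mul_zero, zero_add]

/-! ### Correctness of the search -/

/-- Polynomial-valued functions of the codeword in the five coordinates. -/
abbrev Fn := (Fin 5 → ZMod 64) → MvPolynomial (Fin 7) ℚ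

/-- The row as a vector modulo 64. -/
def Row.vec : Row → Fin 5 → ZMod 64
  | .mk r0 r1 r2 r3 r4 => st r0 r1 r2 r3 r4

/-- The sum over adding the row 0 or 4 times more, weighted by the variable of the message entry. -/
def Tag.op (f : Fn) : Tag → Fn
  | .mk t r0 r1 r2 r3 r4 => fun c =>
      val (pa t) * f c + val (pa (t + 4)) * f (c + (4 : ZMod 64) • st r0 r1 r2 r3 r4)

/-- The iteration of `Tag.op` over a list of tagged rows; this is the sum computed by `dfs2`. -/
def tagSum (f : Fn) (tags : List Tag) : Fn := tags.foldr (fun x g => x.op g) f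

lemma st_add (k c0 c1 c2 c3 c4 r0 r1 r2 r3 r4 : ℕ) :
    st (c0 + k * r0) (c1 + k * r1) (c2 + k * r2) (c3 + k * r3) (c4 + k * r4) =
      st c0 c1 c2 c3 c4 + (k : ZMod 64) • st r0 r1 r2 r3 r4 := by
  ext i; fin_cases i <;> simp [st]

lemma S_dfs2 (f : Fn) (lf : ℕ → ℕ → ℕ → ℕ → ℕ → ℕ → List ℕ → List ℕ)
    (h : ∀ c0 c1 c2 c3 c4 key acc, S (lf c0 c1 c2 c3 c4 key acc) =
      val key * f (st c0 c1 c2 c3 c4) + S acc) (tags : List Tag) (c0 c1 c2 c3 c4 key : ℕ)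
    (acc : List ℕ) : S (dfs2 lf tags c0 c1 c2 c3 c4 key acc) =
      val key * tagSum f tags (st c0 c1 c2 c3 c4) + S acc := by
  induction tags generalizing c0 c1 c2 c3 c4 key acc with
  | nil => exact h _ _ _ _ _ _ _
  | cons x tags ih =>
    obtain ⟨t, r0, r1, r2, r3, r4⟩ := x
    change S (dfs2 lf tags c0 c1 c2 c3 c4 (key * pa t) (dfs2 lf tags (c0 + 4 * r0) (c1 + 4 * r1)
      (c2 + 4 * r2) (c3 + 4 * r3) (c4 + 4 * r4) (key * pa (t+4)) acc)) = _
    rw [ih, ih, st_add]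
    simp only [tagSum, List.foldr_cons, Tag.op, map_mul]
    push_cast
    ring

lemma ok_four {v : ZMod 8} {c : ℕ} (h : ¬ ok v.val c 4 = true) :
    v ≠ 0 ∧ 16 * (c : ZMod 64) ≠ 0 := by
  have h4 : (16 * (c : ZMod 64) = 0) ↔ c % 4 = 0 := by
    have : (16 * (c : ZMod 64)) = ((16 * c : ℕ) : ZMod 64) := by push_cast; rfl
    rw [this, ZMod.natCast_eq_zero_iff]; omega
  rw [ne_eq, ne_eq, h4]
  unfold ok at h
  simp only [cond_eq, Nat.beq_eq, ZMod.val_eq_zero] at h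
  split_ifs at h with h0
  · exact absurd rfl h
  · exact ⟨h0, by simpa using h⟩

/-- Adding multiples of 4 does not change `c i` modulo 4, so a branch in which `c i` is not divisible by
4 although `v i ≠ 0` contributes nothing. This justifies the cut made in `perV`. -/
lemma tagSum_eq_zero {v : Fin 5 → ZMod 8} {i : Fin 5} (hv : v i ≠ 0) (tags : List Tag)
    (c : Fin 5 → ZMod 64) (hc : 16 * c i ≠ 0) : tagSum (L v) tags c = 0 := by
  induction tags generalizing c with
  | nil =>
    have : w (c i) (v i) = 0 := by
      have h : ∀ c : ZMod 64, 8 * c = 0 → 16 * c = 0 := by decide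
      rw [w, if_neg]
      rintro (h0 | h0)
      · exact hv h0
      · exact hc (h _ h0)
    rw [tagSum, List.foldr_nil, L, Finset.prod_eq_zero (Finset.mem_univ i) this, smul_zero]
  | cons x tags ih =>
    obtain ⟨t, r0, r1, r2, r3, r4⟩ := x
    have h1 := ih c hc
    have h2 := ih (c + (4 : ZMod 64) • st r0 r1 r2 r3 r4) (by
      have : ∀ x y : ZMod 64, 16 * (x + 4 * y) = 16 * x := by decide +kernel
      rw [Pi.add_apply, Pi.smul_apply, smul_eq_mul, this]; exact hc)
    change val (pa t) * tagSum (L v) tags c +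
      val (pa (t + 4)) * tagSum (L v) tags (c + (4 : ZMod 64) • st r0 r1 r2 r3 r4) = 0
    rw [h1, h2, mul_zero, mul_zero, add_zero]

/-- The sum over the four even multiples of the row `r`, weighted by the variable of the message entry. -/
def rowOp (r : Fin 5 → ZMod 64) (f : Fn) : Fn := fun c =>
  val (pa 0) * f c + val (pa 4) * f (c + (4 : ZMod 64) • r) +
    val (pa 2) * f (c + (2 : ZMod 64) • r) + val (pa 6) * f (c + (6 : ZMod 64) • r)

/-- The iteration of `rowOp` over a list of rows; this is the sum computed by both stages. -/
def rowSum (K : List Row) (f : Fn) : Fn := K.foldl (fun g x => rowOp x.vec g) f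

lemma rowSum_cons (x : Row) (K : List Row) (f : Fn) :
    rowSum (x :: K) f = rowSum K (rowOp x.vec f) := rfl

lemma rowSum_add (K : List Row) (f g : Fn) (c : Fin 5 → ZMod 64) :
    rowSum K (fun c => f c + g c) c = rowSum K f c + rowSum K g c := by
  induction K generalizing f g with
  | nil => rfl
  | cons x K ih =>
    rw [rowSum_cons, rowSum_cons, rowSum_cons, ← ih]
    congr 1
    funext c
    simp only [rowOp]; ring

lemma rowSum_mul (K : List Row) (p : MvPolynomial (Fin 7) ℚ) (f : Fn) (c : Fin 5 → ZMod 64) :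
    rowSum K (fun c => p * f c) c = p * rowSum K f c := by
  induction K generalizing f with
  | nil => rfl
  | cons x K ih =>
    rw [rowSum_cons, rowSum_cons, ← ih]
    congr 1
    funext c
    simp only [rowOp]; ring

lemma rowSum_shift (K : List Row) (d : Fin 5 → ZMod 64) (f : Fn) (c : Fin 5 → ZMod 64) :
    rowSum K (fun c => f (c + d)) c = rowSum K f (c + d) := by
  induction K generalizing f with
  | nil => rfl
  | cons x K ih =>
    rw [rowSum_cons, rowSum_cons, ← ih]
    congr 1
    funext c
    simp only [rowOp, add_right_comm]

lemma S_dfs1 (f : Fn) (key : ℕ) (lf : ℕ → ℕ → ℕ → ℕ → ℕ → List Tag → List ℕ → List ℕ)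
    (h : ∀ c0 c1 c2 c3 c4 tags acc, S (lf c0 c1 c2 c3 c4 tags acc) =
      val key * tagSum f tags (st c0 c1 c2 c3 c4) + S acc) (K : List Row) (c0 c1 c2 c3 c4 : ℕ)
    (tags : List Tag) (acc : List ℕ) : S (dfs1 lf K c0 c1 c2 c3 c4 tags acc) =
      val key * rowSum K (tagSum f tags) (st c0 c1 c2 c3 c4) + S acc := by
  induction K generalizing c0 c1 c2 c3 c4 tags acc with
  | nil => exact h _ _ _ _ _ _ _
  | cons x K ih =>
    obtain ⟨r0, r1, r2, r3, r4⟩ := x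
    change S (dfs1 lf K c0 c1 c2 c3 c4 (Tag.mk 0 r0 r1 r2 r3 r4 :: tags)
        (dfs1 lf K (c0 + 2 * r0) (c1 + 2 * r1) (c2 + 2 * r2) (c3 + 2 * r3) (c4 + 2 * r4)
          (Tag.mk 2 r0 r1 r2 r3 r4 :: tags) acc)) = _
    rw [ih, ih, st_add, ← rowSum_shift, ← add_assoc, ← mul_add, ← rowSum_add, rowSum_cons]
    congr 3
    funext c
    simp only [tagSum, List.foldr_cons, Tag.op, rowOp, Row.vec]
    have : c + ((2 : ℕ) : ZMod 64) • st r0 r1 r2 r3 r4 + (4 : ZMod 64) • st r0 r1 r2 r3 r4 =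
        c + (6 : ZMod 64) • st r0 r1 r2 r3 r4 := by
      rw [add_assoc, ← add_smul]; rfl
    rw [this]
    push_cast
    ring

/-- The sum over the four even multiples of the row `r`, weighted by `w`, where the dual word has the
entry `-∑ i, v i * r i` in the corresponding systematic coordinate. -/
def gop (v : Fin 5 → ZMod 8) (r : Fin 5 → ZMod 64) (f : Fn) : Fn := fun c =>
  ∑ a : ZMod 8, (if a.val % 2 = 0 then w (up a) (-∑ i, v i * red8 (r i)) else 0) *
    f (c + up a • r)

lemma gop_zero {v : Fin 5 → ZMod 8} {r : Fin 5 → ZMod 64} (h : ∑ i, v i * red8 (r i) = 0)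
    (f : Fn) : gop v r f = rowOp r f := by
  funext c
  have hsum : ∀ f : ZMod 8 → MvPolynomial (Fin 7) ℚ,
      ∑ b, f b = f 0 + f 1 + f 2 + f 3 + f 4 + f 5 + f 6 + f 7 := Fin.sum_univ_eight
  have v0 : (0 : ZMod 8).val = 0 ∧ (1 : ZMod 8).val = 1 ∧ (2 : ZMod 8).val = 2 ∧
      (3 : ZMod 8).val = 3 ∧ (4 : ZMod 8).val = 4 ∧ (5 : ZMod 8).val = 5 ∧ (6 : ZMod 8).val = 6 ∧
      (7 : ZMod 8).val = 7 := by decide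
  obtain ⟨v0, v1, v2, v3, v4, v5, v6, v7⟩ := v0
  rw [gop, h, hsum, v0, v1, v2, v3, v4, v5, v6, v7]
  simp only [rowOp, w, adm, up, v0, v2, v4, v6, val_pa, neg_zero, true_or, if_true]
  norm_num
  ring

lemma gop_ne {v : Fin 5 → ZMod 8} {r : Fin 5 → ZMod 64} {b : ℕ}
    (hb : ∑ i, v i * red8 (r i) = b) (h : b % 8 ≠ 0) (f : Fn) :
    gop v r f = fun c => val (pb b) * f c := by
  funext c
  have h0 : (b : ZMod 8) ≠ 0 := by
    rw [ne_eq, ZMod.natCast_eq_zero_iff]; omega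
  have hup : ∀ a : ZMod 8, a ≠ 0 → ¬ 8 * up a = 0 := by unfold up; decide
  rw [gop, Finset.sum_eq_single (0 : ZMod 8)]
  · have hvi : ∀ (c : ZMod 64) (b : ZMod 8), b ≠ 0 → vi c (-b) = vi c b := by decide +kernel
    have hu0 : up 0 = 0 := by decide
    have ha : adm 0 (-(b : ZMod 8)) := Or.inr (mul_zero _)
    rw [hb, w, hvi _ _ h0, hu0, if_pos ha, ← val_pb b h 0, ZMod.val_zero, if_pos rfl, zero_smul,
      add_zero]
  · intro a _ ha
    have hw0 : w (up a) (-(b : ZMod 8)) = 0 := by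
      rw [w, if_neg]
      rintro (h1 | h1)
      · exact h0 (by simpa using h1)
      · exact hup a ha h1
    rw [hb, hw0, ite_self, zero_mul]
  · simp

/-- The iteration of `gop` over a list of rows. -/
def fullSum (v : Fin 5 → ZMod 8) (rows : List Row) (f : Fn) : Fn :=
  rows.foldr (fun x g => gop v x.vec g) f

lemma S_prep (v : Fin 5 → ZMod 8) (f : Fn) (c : Fin 5 → ZMod 64) (p : MvPolynomial (Fin 7) ℚ)
    (k : ℕ → List Row → List ℕ) (hk : ∀ key K, S (k key K) = val key * rowSum K f c + p)
    (rows : List Row) (key : ℕ) (K : List Row) :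
    S (prep (v 0).val (v 1).val (v 2).val (v 3).val (v 4).val rows k key K) =
      val key * rowSum K (fullSum v rows f) c + p := by
  induction rows generalizing key K with
  | nil => exact hk _ _
  | cons x rows ih =>
    obtain ⟨r0, r1, r2, r3, r4⟩ := x
    set b := (v 0).val * r0 + (v 1).val * r1 + (v 2).val * r2 + (v 3).val * r3 + (v 4).val * r4
      with hb
    change S (cond (Nat.beq (b % 8) 0)
      (prep (v 0).val (v 1).val (v 2).val (v 3).val (v 4).val rows k key (.mk r0 r1 r2 r3 r4 :: K))
      (prep (v 0).val (v 1).val (v 2).val (v 3).val (v 4).val rows k (key * pb b) K)) = _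
    have hbc : ∑ i, v i * red8 ((Row.mk r0 r1 r2 r3 r4).vec i) = (b : ZMod 8) := by
      simp [Fin.sum_univ_five, Row.vec, st, hb]
    simp only [cond_eq, Nat.beq_eq]
    have hf : fullSum v (.mk r0 r1 r2 r3 r4 :: rows) f =
      gop v (Row.mk r0 r1 r2 r3 r4).vec (fullSum v rows f) := rfl
    split_ifs with h
    · rw [ih, rowSum_cons, hf, gop_zero]
      rw [hbc, ZMod.natCast_eq_zero_iff]; omega
    · rw [ih, hf, gop_ne hbc h, rowSum_mul, map_mul, mul_assoc]

/-- The contribution of the dual word `bvec v` to the octad class, for messages with first entry 1. -/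
def contrib (v : Fin 5 → ZMod 8) (rows : List Row) : MvPolynomial (Fin 7) ℚ :=
  if ∑ i, v i * red8 (M0 0 (five i)) = 0 then
    X 0 ^ 8 * fullSum v rows (L v) (fun i => M0 0 (five i)) else 0

lemma S_perV (v : Fin 5 → ZMod 8) (rows : List Row) (acc : List ℕ) :
    S (perV rows (v 0).val (v 1).val (v 2).val (v 3).val (v 4).val acc) =
      contrib v rows + S acc := by
  have h0 : (fun i => M0 0 (five i)) = st 22 4 38 60 20 := by
    have : ∀ i, M0 0 (five i) = st 22 4 38 60 20 i := by unfold st; decide +kernel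
    exact funext this
  have hb : ∑ i, v i * red8 (M0 0 (five i)) =
      (((v 0).val * 22 + (v 1).val * 4 + (v 2).val * 38 + (v 3).val * 60 + (v 4).val * 20 : ℕ) :
        ZMod 8) := by
    have h1 : ∀ i, M0 0 (five i) = st 22 4 38 60 20 i := congrFun h0
    simp only [h1]
    have h2 : ∀ n : ℕ, red8 (n : ZMod 64) = (n : ZMod 8) := map_natCast red8
    simp only [Fin.sum_univ_five, st, Matrix.cons_val, h2]
    push_cast
    simp only [ZMod.natCast_val, ZMod.cast_id', id]
  have h256 : val 256 = X 0 ^ 8 := by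
    rw [show (256 : ℕ) = 2 ^ 8 by norm_num, map_pow, val_two]
  unfold perV contrib
  simp only [hb, h0, ZMod.natCast_eq_zero_iff, cond_eq, Nat.beq_eq, Nat.dvd_iff_mod_eq_zero]
  split_ifs with h
  · rw [S_prep v (L v) (st 22 4 38 60 20) (S acc), h256]
    · rfl
    · intro key K
      rw [S_dfs1 (L v) key]
      · rfl
      · intro c0 c1 c2 c3 c4 tags acc
        split_ifs with hchk
        · exact S_dfs2 (L v) _ (S_leaf v) _ _ _ _ _ _ _ _
        · suffices tagSum (L v) tags (st c0 c1 c2 c3 c4) = 0 by rw [this, mul_zero, zero_add]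
          rw [chk_iff] at hchk
          have hi : ∀ (i : Fin 5) (c : ℕ), st c0 c1 c2 c3 c4 i = c → ¬ ok (v i).val c 4 = true →
              tagSum (L v) tags (st c0 c1 c2 c3 c4) = 0 := by
            intro i c hc hok
            obtain ⟨a, b⟩ := ok_four hok
            exact tagSum_eq_zero a _ _ (by rw [hc]; exact b)
          by_contra hne
          exact hchk ⟨not_not.mp fun h => hne (hi 0 c0 rfl h), not_not.mp fun h => hne (hi 1 c1 rfl h),
            not_not.mp fun h => hne (hi 2 c2 rfl h), not_not.mp fun h => hne (hi 3 c3 rfl h),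
            not_not.mp fun h => hne (hi 4 c4 rfl h)⟩
  · rw [zero_add]

/-! ### Summation over the dual words -/

lemma S_all8 (f : ℕ → List ℕ → List ℕ) (p : ZMod 8 → MvPolynomial (Fin 7) ℚ)
    (h : ∀ (x : ZMod 8) acc, S (f x.val acc) = p x + S acc) (acc : List ℕ) :
    S (all8 f acc) = ∑ x, p x + S acc := by
  have hsum : ∑ x, p x = p 0 + p 1 + p 2 + p 3 + p 4 + p 5 + p 6 + p 7 := Fin.sum_univ_eight p
  rw [hsum, all8]
  have h0 := h 0
  have h1 := h 1
  have h2 := h 2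
  have h3 := h 3
  have h4 := h 4
  have h5 := h 5
  have h6 := h 6
  have h7 := h 7
  change ∀ acc, S (f 0 acc) = _ at h0
  change ∀ acc, S (f 1 acc) = _ at h1
  change ∀ acc, S (f 2 acc) = _ at h2
  change ∀ acc, S (f 3 acc) = _ at h3
  change ∀ acc, S (f 4 acc) = _ at h4
  change ∀ acc, S (f 5 acc) = _ at h5
  change ∀ acc, S (f 6 acc) = _ at h6
  change ∀ acc, S (f 7 acc) = _ at h7
  rw [h0, h1, h2, h3, h4, h5, h6, h7]
  ring

lemma S_even8 (f : ℕ → List ℕ → List ℕ) (p : ZMod 8 → MvPolynomial (Fin 7) ℚ)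
    (h : ∀ (x : ZMod 8) acc, S (f x.val acc) = p x + S acc) (acc : List ℕ) :
    S (even8 f acc) = (∑ x, if x.val % 2 = 0 then p x else 0) + S acc := by
  have hsum : (∑ x : ZMod 8, if x.val % 2 = 0 then p x else 0) = p 0 + p 2 + p 4 + p 6 := by
    have hs : ∀ f : ZMod 8 → MvPolynomial (Fin 7) ℚ,
      ∑ b, f b = f 0 + f 1 + f 2 + f 3 + f 4 + f 5 + f 6 + f 7 := Fin.sum_univ_eight
    have v0 : (0 : ZMod 8).val = 0 ∧ (1 : ZMod 8).val = 1 ∧ (2 : ZMod 8).val = 2 ∧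
      (3 : ZMod 8).val = 3 ∧ (4 : ZMod 8).val = 4 ∧ (5 : ZMod 8).val = 5 ∧ (6 : ZMod 8).val = 6 ∧
      (7 : ZMod 8).val = 7 := by decide
    obtain ⟨v0, v1, v2, v3, v4, v5, v6, v7⟩ := v0
    rw [hs, v0, v1, v2, v3, v4, v5, v6, v7]
    norm_num
  rw [hsum, even8]
  have h0 := h 0
  have h2 := h 2
  have h4 := h 4
  have h6 := h 6
  change ∀ acc, S (f 0 acc) = _ at h0
  change ∀ acc, S (f 2 acc) = _ at h2
  change ∀ acc, S (f 4 acc) = _ at h4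
  change ∀ acc, S (f 6 acc) = _ at h6
  rw [h0, h2, h4, h6]
  ring

lemma sum_cons {n : ℕ} (P : (Fin (n + 1) → ZMod 8) → MvPolynomial (Fin 7) ℚ) :
    ∑ v, P v = ∑ x, ∑ v, P (Matrix.vecCons x v) := by
  rw [← (Fin.consEquiv (fun _ : Fin (n + 1) => ZMod 8)).sum_comp, Fintype.sum_prod_type]
  rfl

lemma sum_five (P : (Fin 5 → ZMod 8) → MvPolynomial (Fin 7) ℚ) :
    ∑ v, P v = ∑ v0, ∑ v1, ∑ v2, ∑ v3, ∑ v4, P ![v0, v1, v2, v3, v4] := by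
  simp only [sum_cons, Fintype.sum_unique]
  rfl

/-- The five blocks of `run` enumerate the vectors `v` by the position of the first odd entry, which is
normalized to 1. -/
lemma S_run (rows : List Row) :
    S (run rows) = ∑ v, if lead v = 1 then contrib v rows else 0 := by
  have hP : ∀ (v0 v1 v2 v3 v4 : ZMod 8) (acc : List ℕ),
      S (perV rows v0.val v1.val v2.val v3.val v4.val acc) =
        contrib ![v0, v1, v2, v3, v4] rows + S acc :=
    fun v0 v1 v2 v3 v4 => S_perV ![v0, v1, v2, v3, v4] rows
  unfold run
  rw [S_all8 _ _ fun v1 => S_all8 _ _ fun v2 => S_all8 _ _ fun v3 => S_all8 _ _ fun v4 =>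
      hP 1 v1 v2 v3 v4,
    S_even8 _ _ fun v0 => S_all8 _ _ fun v2 => S_all8 _ _ fun v3 => S_all8 _ _ fun v4 =>
      hP v0 1 v2 v3 v4,
    S_even8 _ _ fun v0 => S_even8 _ _ fun v1 => S_all8 _ _ fun v3 => S_all8 _ _ fun v4 =>
      hP v0 v1 1 v3 v4,
    S_even8 _ _ fun v0 => S_even8 _ _ fun v1 => S_even8 _ _ fun v2 => S_all8 _ _ fun v4 =>
      hP v0 v1 v2 1 v4,
    S_even8 _ _ fun v0 => S_even8 _ _ fun v1 => S_even8 _ _ fun v2 => S_even8 _ _ fun v3 =>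
      hP v0 v1 v2 v3 1]
  have h1 : (1 : ZMod 8).val % 2 = 1 := by decide
  have hl : ∀ v : Fin 5 → ZMod 8, ∀ v0 v1 v2 v3 v4 : ZMod 8, v = ![v0, v1, v2, v3, v4] →
      (if lead v = 1 then contrib v rows else 0) =
      (if v0 = 1 then contrib v rows else 0) +
      (if (v0).val % 2 = 0 then if v1 = 1 then contrib v rows else 0 else 0) +
      (if (v0).val % 2 = 0 then if (v1).val % 2 = 0 then if v2 = 1 then contrib v rows else 0
        else 0 else 0) +
      (if (v0).val % 2 = 0 then if (v1).val % 2 = 0 then if (v2).val % 2 = 0 then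
        if v3 = 1 then contrib v rows else 0 else 0 else 0 else 0) +
      (if (v0).val % 2 = 0 then if (v1).val % 2 = 0 then if (v2).val % 2 = 0 then
        if (v3).val % 2 = 0 then
        if v4 = 1 then contrib v rows else 0 else 0 else 0 else 0 else 0) := by
    intro v v0 v1 v2 v3 v4 hv
    have e0 : v0 = v 0 := by rw [hv]; rfl
    have e1 : v1 = v 1 := by rw [hv]; rfl
    have e2 : v2 = v 2 := by rw [hv]; rfl
    have e3 : v3 = v 3 := by rw [hv]; rfl
    have e4 : v4 = v 4 := by rw [hv]; rfl
    rw [e0, e1, e2, e3, e4]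
    have : lead v = 1 ↔ v 0 = 1 ∨ ((v 0).val % 2 = 0 ∧ (v 1 = 1 ∨ ((v 1).val % 2 = 0 ∧
      (v 2 = 1 ∨ ((v 2).val % 2 = 0 ∧ (v 3 = 1 ∨ ((v 3).val % 2 = 0 ∧ v 4 = 1))))))) := by
      have ho : ∀ x : ZMod 8, x.val % 2 = 1 → ¬ x.val % 2 = 0 := by intro x hx; omega
      have he : ∀ x : ZMod 8, ¬ x.val % 2 = 1 → x.val % 2 = 0 := by intro x hx; omega
      have hx : ∀ x : ZMod 8, ¬ x.val % 2 = 1 → ¬ x = 1 := by decide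
      unfold lead
      split_ifs with a0 a1 a2 a3 a4
      · simp only [ho _ a0, false_and, or_false]
      · simp only [he _ a0, hx _ a0, ho _ a1, false_and, or_false, true_and, false_or]
      · simp only [he _ a0, hx _ a0, he _ a1, hx _ a1, ho _ a2, false_and, or_false, true_and,
          false_or]
      · simp only [he _ a0, hx _ a0, he _ a1, hx _ a1, he _ a2, hx _ a2, ho _ a3, false_and,
          or_false, true_and, false_or]
      · simp only [he _ a0, hx _ a0, he _ a1, hx _ a1, he _ a2, hx _ a2, he _ a3, hx _ a3, true_and,
          false_or]
      · simp only [hx _ a0, hx _ a1, hx _ a2, hx _ a3, hx _ a4, and_false, or_false]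
        decide
    have hx : ∀ x : ZMod 8, x.val % 2 = 0 → ¬ x = 1 := by decide
    simp only [this]
    by_cases a0 : (v 0).val % 2 = 0
    · have b0 := hx _ a0
      by_cases a1 : (v 1).val % 2 = 0
      · have b1 := hx _ a1
        by_cases a2 : (v 2).val % 2 = 0
        · have b2 := hx _ a2
          by_cases a3 : (v 3).val % 2 = 0
          · have b3 := hx _ a3
            simp only [a0, b0, a1, b1, a2, b2, a3, b3, if_true, if_false, true_and, false_or,
              zero_add]
          · simp only [a0, b0, a1, b1, a2, b2, a3, if_true, if_false, true_and, false_or, false_and,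
              or_false, zero_add, add_zero]
        · simp only [a0, b0, a1, b1, a2, if_true, if_false, true_and, false_or, false_and,
              or_false, zero_add, add_zero]
      · simp only [a0, b0, a1, if_true, if_false, true_and, false_or, false_and,
              or_false, zero_add, add_zero]
    · simp only [a0, if_false, false_and, or_false, add_zero]
  rw [sum_five]
  simp only [fun v0 v1 v2 v3 v4 => hl ![v0, v1, v2, v3, v4] v0 v1 v2 v3 v4 rfl,
    Finset.sum_add_distrib]
  simp only [S, List.map_nil, List.sum_nil, add_zero, ← add_assoc]
  have hite : ∀ (c : Prop) [Decidable c] (f : ZMod 8 → MvPolynomial (Fin 7) ℚ),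
      (∑ x, if c then f x else 0) = if c then ∑ x, f x else 0 := by
    intro c _ f; split_ifs <;> simp
  simp only [hite, Finset.sum_ite_eq', Finset.mem_univ, if_true]

/-! ### The contribution of an octad -/

lemma foldr_gop (v : Fin 5 → ZMod 8) (f : Fn) (n : ℕ) (ρ : Fin n → Fin 5 → ZMod 64)
    (c : Fin 5 → ZMod 64) :
    (List.ofFn ρ).foldr (fun r g => gop v r g) f c = ∑ a : Fin n → ZMod 8,
      (∏ k, if (a k).val % 2 = 0 then w (up (a k)) (-∑ i, v i * red8 (ρ k i)) else 0) *
        f (c + ∑ k, up (a k) • ρ k) := by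
  induction n generalizing c with
  | zero => simp
  | succ n ih =>
    rw [List.ofFn_succ, List.foldr_cons, gop, sum_cons]
    refine Finset.sum_congr rfl fun x _ => ?_
    rw [ih, Finset.mul_sum]
    refine Finset.sum_congr rfl fun a _ => ?_
    rw [Fin.prod_univ_succ, Fin.sum_univ_succ (fun k => up (Matrix.vecCons x a k) • ρ k)]
    simp only [Matrix.cons_val_zero, Matrix.cons_val_succ]
    rw [mul_assoc, add_assoc]
    rfl

/-- The systematic coordinates other than the first. -/
def info (k : Fin 11) : Fin 24 := Fin.castLE (by norm_num) k.succ

lemma rowsA_eq : rowsA.map Row.vec = List.ofFn fun k : Fin 11 => fun i => M0 k.succ (five i) := by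
  decide +kernel

/-- The 24 coordinates are the eight of the octad, the eleven systematic ones other than the first, and
the five remaining ones. -/
lemma split_bijective : Function.Bijective (Sum.elim oct (Sum.elim info five)) := by
  decide +kernel

lemma prod_split {M : Type*} [CommMonoid M] (f : Fin 24 → M) :
    ∏ j, f j = (∏ l, f (oct l)) * ((∏ k, f (info k)) * ∏ i, f (five i)) := by
  rw [← (Equiv.ofBijective _ split_bijective).prod_comp]
  simp

lemma sum_split {M : Type*} [AddCommMonoid M] (f : Fin 24 → M) :
    ∑ j, f j = (∑ l, f (oct l)) + ((∑ k, f (info k)) + ∑ i, f (five i)) := by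
  rw [← (Equiv.ofBijective _ split_bijective).sum_comp]
  simp

lemma bvec_castLE (v : Fin 5 → ZMod 8) (k : Fin 12) :
    bvec v (Fin.castLE (by norm_num) k) = -∑ i, v i * red8 (M0 k (five i)) := by
  have h : ∀ i k, H i (Fin.castLE (by norm_num) k) = - ZMod.cast (M0 k (five i)) := by
    intro i k
    simp only [H, Fin.val_castLE, k.isLt, dif_pos]
  simp only [bvec, Matrix.vecMul, dotProduct, h, mul_neg, Finset.sum_neg_distrib]
  rfl

lemma bvec_oct_succ (v : Fin 5 → ZMod 8) (l : Fin 7) : bvec v (oct l.succ) = 0 := by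
  have h : ∀ i, ∀ l : Fin 7, H i (oct l.succ) = 0 := by decide +kernel
  simp only [bvec, Matrix.vecMul, dotProduct, h, mul_zero, Finset.sum_const_zero]

lemma w_zero_odd {c : ZMod 64} (hc : c.val % 2 = 1) : w c 0 = X 0 := by
  have ha : adm c 0 := Or.inl rfl
  rw [w, if_pos ha, vi, if_pos rfl, if_pos hc]

lemma word_five (a : Fin 11 → ZMod 8) (i : Fin 5) :
    word (fun k => up ((Fin.cons 1 a : Fin 12 → ZMod 8) k)) (five i) =
      M0 0 (five i) + (∑ k, up (a k) • fun i => M0 k.succ (five i)) i := by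
  have h1 : up 1 = 1 := by decide
  simp only [word, Matrix.vecMul, dotProduct]
  rw [Fin.sum_univ_succ]
  simp only [Fin.cons_zero, Fin.cons_succ, h1, one_mul, Finset.sum_apply, Pi.smul_apply,
    smul_eq_mul]

lemma cons_mem_cls {a : Fin 11 → ZMod 8} (ha : ∀ k, (a k).val % 2 = 0) :
    (fun k => up ((Fin.cons 1 a : Fin 12 → ZMod 8) k)) ∈ cls (vec 1) := by
  have hv : ∀ k : Fin 12, vec 1 k = if k = 0 then 1 else 0 := by decide +kernel
  have h0 : ∀ x : ZMod 8, x.val % 2 = 0 → (ZMod.cast (up x) : ZMod 2) = 0 := by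
    unfold up; decide +kernel
  have h1 : (ZMod.cast (up 1) : ZMod 2) = 1 := by decide +kernel
  rw [mem_cls]
  funext k
  rw [hv]
  refine Fin.cases ?_ (fun k => ?_) k
  · exact h1
  · rw [if_neg (Fin.succ_ne_zero k)]
    exact h0 _ (ha k)

set_option maxRecDepth 8000 in
lemma T_eq (v : Fin 5 → ZMod 8) {a : Fin 11 → ZMod 8} (ha : ∀ k, (a k).val % 2 = 0) :
    T (Fin.cons 1 a) (bvec v) = if ∑ i, v i * red8 (M0 0 (five i)) = 0 then
      X 0 ^ 8 * ((∏ k, w (up (a k)) (-∑ i, v i * red8 (M0 k.succ (five i)))) *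
        L v ((fun i => M0 0 (five i)) + ∑ k, up (a k) • fun i => M0 k.succ (five i))) else 0 := by
  have hodd := odd_oct (cons_mem_cls ha)
  have h5 := word_five a
  have hinfo : ∀ k, word (fun k => up ((Fin.cons 1 a : Fin 12 → ZMod 8) k)) (info k) = up (a k) := by
    intro k
    rw [info, word_castAdd, Fin.cons_succ]
  have hw0 : word (fun k => up ((Fin.cons 1 a : Fin 12 → ZMod 8) k)) (oct 0) = 1 := by
    have := word_castAdd (fun k => up ((Fin.cons 1 a : Fin 12 → ZMod 8) k)) 0
    rw [Fin.cons_zero] at this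
    exact this
  have hb0 : bvec v (oct 0) = -∑ i, v i * red8 (M0 0 (five i)) := bvec_castLE v 0
  rw [T, term]
  generalize word (fun k => up ((Fin.cons 1 a : Fin 12 → ZMod 8) k)) = x at *
  rw [prod_split, Fin.prod_univ_succ (fun l => w (x (oct l)) (bvec v (oct l)))]
  split_ifs with h
  · have hocts : ∀ l, bvec v (oct l) = 0 := by
      intro l
      refine Fin.cases ?_ (fun l => ?_) l
      · rw [hb0, h, neg_zero]
      · exact bvec_oct_succ v l
    have hbi : ∀ k, bvec v (info k) = -∑ i, v i * red8 (M0 k.succ (five i)) :=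
      fun k => bvec_castLE v k.succ
    simp only [hocts, w_zero_odd (hodd _), Finset.prod_const, Finset.card_univ, Fintype.card_fin]
    rw [← pow_succ' (X 0 : MvPolynomial (Fin 7) ℚ) 7]
    simp only [hinfo, hbi, bvec_five, h5]
    rw [← mul_smul_comm]
    congr 1
    by_cases hz : ∏ k, w (up (a k)) (-∑ i, v i * red8 (M0 k.succ (five i))) = 0
    · rw [hz, zero_mul, zero_mul, smul_zero]
    · have hph : phase x (bvec v) = ∑ i, up (v i) *
          (M0 0 (five i) + (∑ k, up (a k) • fun i => M0 k.succ (five i)) i) := by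
        rw [phase, sum_split]
        simp only [hocts, bvec_five, h5]
        have hu0 : up 0 = 0 := by decide
        have : ∀ k, up (bvec v (info k)) * x (info k) = 0 := by
          intro k
          have hk : w (up (a k)) (bvec v (info k)) ≠ 0 := by
            rw [hbi]; exact fun h0 => hz (Finset.prod_eq_zero (Finset.mem_univ k) h0)
          have had : adm (up (a k)) (bvec v (info k)) := by
            by_contra hh; exact hk (by rw [w, if_neg hh])
          rw [hinfo]
          have hall : ∀ a b : ZMod 8, adm (up a) b → up b * up a = 0 := by unfold up; decide +kernel
          exact hall _ _ had
        simp only [this, hu0, zero_mul, Finset.sum_const_zero, zero_add]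
      rw [hph, ← mul_smul_comm]
      rfl
  · have : w (x (oct 0)) (bvec v (oct 0)) = 0 := by
      rw [hw0, hb0, w, if_neg]
      rintro (h1 | h1)
      · exact h (by simpa using h1)
      · revert h1; decide
    rw [this, zero_mul, zero_mul, smul_zero]

lemma sum_T_eq (v : Fin 5 → ZMod 8) :
    (∑ a : Fin 11 → ZMod 8, if ∀ k, (a k).val % 2 = 0 then T (Fin.cons 1 a) (bvec v) else 0) =
      contrib v rowsA := by
  have hfull : fullSum v rowsA (L v) =
      (rowsA.map Row.vec).foldr (fun r g => gop v r g) (L v) := by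
    rw [fullSum, List.foldr_map]
  rw [contrib, hfull, rowsA_eq, foldr_gop]
  split_ifs with h
  · rw [Finset.mul_sum]
    refine Finset.sum_congr rfl fun a _ => ?_
    split_ifs with ha
    · rw [T_eq v ha, if_pos h]
      simp only [ha, if_true]
    · obtain ⟨k, hk⟩ := not_forall.mp ha
      rw [Finset.prod_eq_zero (Finset.mem_univ k) (if_neg hk), zero_mul, mul_zero]
  · refine Finset.sum_eq_zero fun a _ => ?_
    split_ifs with ha
    · rw [T_eq v ha, if_neg h]
    · rfl

/-- The outcome of the search up to order. The codes are factored in `val_codes`; the fourth and fifth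
blocks cancel each other. -/
def result : List ℕ := List.replicate 16 33253215428530944 ++ List.replicate 8 2444451242897664 ++
  List.replicate 8 129012704486265600 ++ List.replicate 16 30190017487069440 ++
  List.replicate 16 573610332254319360 ++ List.replicate 8 4861581203001600

set_option maxRecDepth 100000 in
lemma run_perm : (run rowsA).isPerm result = true := by
  decide +kernel

lemma val_codes :
    val 33253215428530944 = - (X 0 ^ 8 * X 1 ^ 4 * X 3 ^ 8 * X 4 ^ 4) ∧
    val 2444451242897664 = X 0 ^ 8 * X 1 ^ 4 * X 3 ^ 8 * X 4 ^ 2 * X 5 ^ 2 ∧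
    val 129012704486265600 = - (X 0 ^ 8 * X 1 ^ 2 * X 2 ^ 2 * X 3 ^ 8 * X 4 ^ 2 * X 5 ^ 2) ∧
    val 573610332254319360 = - val 30190017487069440 ∧
    val 4861581203001600 = X 0 ^ 8 * X 1 ^ 2 * X 2 ^ 2 * X 3 ^ 8 * X 4 ^ 4 := by
  rw [show 33253215428530944 = 19 * (2 ^ 8 * 3 ^ 4 * 7 ^ 8 * 11 ^ 4) by norm_num,
    show 2444451242897664 = 2 ^ 8 * 3 ^ 4 * 7 ^ 8 * 11 ^ 2 * 13 ^ 2 by norm_num,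
    show 129012704486265600 = 19 * (2 ^ 8 * 3 ^ 2 * 5 ^ 2 * 7 ^ 8 * 11 ^ 2 * 13 ^ 2) by norm_num,
    show 573610332254319360 = 19 * 30190017487069440 by norm_num,
    show 4861581203001600 = 2 ^ 8 * 3 ^ 2 * 5 ^ 2 * 7 ^ 8 * 11 ^ 4 by norm_num]
  simp only [map_mul, map_pow, val_two, val_three, val_five, val_seven, val_eleven, val_thirteen,
    val_nineteen, neg_mul, one_mul, and_self]

/-- The value of the sum over the class of the octad, up to the factor `2 ^ 43`. -/
def bracket : MvPolynomial (Fin 7) ℚ := X 0 ^ 8 * X 3 ^ 8 * (-2 * X 1 ^ 4 * X 4 ^ 4 +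
  X 1 ^ 4 * X 4 ^ 2 * X 5 ^ 2 + X 1 ^ 2 * X 2 ^ 2 * X 4 ^ 4 - X 1 ^ 2 * X 2 ^ 2 * X 4 ^ 2 * X 5 ^ 2)

lemma S_run_rowsA : S (run rowsA) = 8 * bracket := by
  have h : S (run rowsA) = S result := ((List.isPerm_iff.mp run_perm).map val).sum_eq
  obtain ⟨h1, h2, h3, h4, h5⟩ := val_codes
  rw [h, S, result]
  simp only [List.map_append, List.sum_append, List.map_replicate, List.sum_replicate, h1, h2, h3,
    h4, h5, bracket, nsmul_eq_mul]
  push_cast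
  ring

/-- The octad class contributes `2 ^ 43 * bracket`, by evaluation of the search. -/
theorem D_A_octad : D (A (vec 1)) = 2 ^ 43 * bracket := by
  rw [D_A_rep]
  simp only [sum_T_eq]
  rw [← S_run, S_run_rowsA]
  ring

/-! ### The lifted generator polynomials -/

/-- The coefficients, constant term first, of one degree-11 factor of `X ^ 23 - 1` modulo 64. -/
def qa : Fin 12 → ZMod 64 := ![63, 22, 25, 4, 45, 21, 17, 38, 60, 20, 23, 1]

/-- The coefficients, constant term first, of the other degree-11 factor of `X ^ 23 - 1` modulo 64. -/
def qb : Fin 12 → ZMod 64 := ![63, 41, 44, 4, 26, 47, 43, 19, 60, 39, 42, 1]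

lemma ofFn_qa :
    Polynomial.ofFn 12 qa = 63 + 22 * Polynomial.X + 25 * Polynomial.X ^ 2 +
    4 * Polynomial.X ^ 3 + 45 * Polynomial.X ^ 4 + 21 * Polynomial.X ^ 5 + 17 * Polynomial.X ^ 6 +
    38 * Polynomial.X ^ 7 + 60 * Polynomial.X ^ 8 + 20 * Polynomial.X ^ 9 +
    23 * Polynomial.X ^ 10 + Polynomial.X ^ 11 := by
  rw [Polynomial.ofFn_eq_sum_monomial]
  simp only [Fin.sum_univ_succ, qa, ← Polynomial.C_mul_X_pow_eq_monomial]
  simp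
  simp only [map_ofNat]
  ring

lemma ofFn_qb :
    Polynomial.ofFn 12 qb = 63 + 41 * Polynomial.X + 44 * Polynomial.X ^ 2 +
    4 * Polynomial.X ^ 3 + 26 * Polynomial.X ^ 4 + 47 * Polynomial.X ^ 5 + 43 * Polynomial.X ^ 6 +
    19 * Polynomial.X ^ 7 + 60 * Polynomial.X ^ 8 + 39 * Polynomial.X ^ 9 +
    42 * Polynomial.X ^ 10 + Polynomial.X ^ 11 := by
  rw [Polynomial.ofFn_eq_sum_monomial]
  simp only [Fin.sum_univ_succ, qb, ← Polynomial.C_mul_X_pow_eq_monomial]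
  simp
  simp only [map_ofNat]
  ring

lemma X_pow_sub_one_eq : (Polynomial.X ^ 23 - 1 : Polynomial (ZMod 64)) =
    (Polynomial.X - 1) * Polynomial.ofFn 12 qa * Polynomial.ofFn 12 qb := by
  have h64 : (64 : Polynomial (ZMod 64)) = 0 := by
    have : (64 : ZMod 64) = 0 := rfl
    rw [← map_ofNat Polynomial.C, this, map_zero]
  rw [ofFn_qa, ofFn_qb]
  generalize (Polynomial.X : Polynomial (ZMod 64)) = x
  linear_combination (62 + 20 * x ^ 2 - 43 * x ^ 3 + 52 * x ^ 4 + 18 * x ^ 5 + 21 * x ^ 6 -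
    11 * x ^ 7 + 81 * x ^ 8 - 4 * x ^ 9 + 15 * x ^ 10 - 88 * x ^ 11 + 26 * x ^ 12 - 14 * x ^ 13 -
    x ^ 14 - 25 * x ^ 15 + 4 * x ^ 16 - 25 * x ^ 17 - 14 * x ^ 18 - 45 * x ^ 19 - 13 * x ^ 20 -
    15 * x ^ 21 - x ^ 22) * h64

lemma ofFn_monic {r : Fin 12 → ZMod 64} (hr : r 11 = 1) :
    (Polynomial.ofFn 12 r).Monic ∧ (Polynomial.ofFn 12 r).natDegree = 11 := by
  have hc : (Polynomial.ofFn 12 r).coeff 11 = 1 := by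
    rw [Polynomial.ofFn_coeff_eq_val_of_lt r (by norm_num)]; exact hr
  have hd : (Polynomial.ofFn 12 r).natDegree = 11 := by
    refine le_antisymm ?_ (Polynomial.le_natDegree_of_ne_zero (by rw [hc]; decide))
    have := Polynomial.ofFn_natDegree_lt (by norm_num : 1 ≤ 12) r
    omega
  exact ⟨by rw [Polynomial.Monic, Polynomial.leadingCoeff, hd, hc], hd⟩

/-- Uniqueness of Hensel lifts. Modulo 2 the cofactor `K` is coprime to `G`, hence to `h`, as `X ^ 23 - 1`
is separable; as the kernel of reduction is nilpotent, `h` and `K` are coprime modulo 64, so that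
`h ∣ G`. -/
lemma hensel_unique {h G K : Polynomial (ZMod 64)} (hGK : Polynomial.X ^ 23 - 1 = G * K)
    (hG : G.Monic) (hh : h.Monic) (hdeg : h.natDegree = G.natDegree)
    (hdvd : h ∣ Polynomial.X ^ 23 - 1) (hmap : h.map red2 = G.map red2) : h = G := by
  have h23 : (((23 : ℕ) : ZMod 2) : ZMod 2) ≠ 0 := by decide
  have hall : ∀ x : ZMod 64, (ZMod.cast x : ZMod 2) = 0 → x ^ 6 = 0 := by decide +kernel
  have : Fact (Nat.Prime 2) := ⟨Nat.prime_two⟩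
  have hsep : (Polynomial.X ^ 23 - 1 : Polynomial (ZMod 2)).Separable := by
    have := Polynomial.separable_X_pow_sub_C (1 : ZMod 2) (n := 23) h23 one_ne_zero
    rwa [map_one] at this
  have hfac : (Polynomial.X ^ 23 - 1 : Polynomial (ZMod 2)) = G.map red2 * K.map red2 := by
    rw [← Polynomial.map_mul, ← hGK]; simp
  rw [hfac] at hsep
  obtain ⟨a2, b2, hab⟩ := hsep.isCoprime
  have hsurj : Function.Surjective (Polynomial.map red2) :=
    Polynomial.map_surjective _ (ZMod.ringHom_surjective red2)
  obtain ⟨a, rfl⟩ := hsurj a2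
  obtain ⟨b, rfl⟩ := hsurj b2
  rw [← hmap] at hab
  have hnil : IsNilpotent (a * h + b * K - 1) := by
    rw [Polynomial.isNilpotent_iff]
    intro i
    have h0 : (a * h + b * K - 1).map red2 = 0 := by
      simp [hab]
    have hi : red2 ((a * h + b * K - 1).coeff i) = 0 := by
      rw [← Polynomial.coeff_map, h0, Polynomial.coeff_zero]
    exact ⟨6, hall _ hi⟩
  obtain ⟨e, he⟩ := hnil.isUnit_add_one
  have hcop : IsCoprime h K := by
    refine ⟨↑e⁻¹ * a, ↑e⁻¹ * b, ?_⟩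
    have : (↑e⁻¹ : Polynomial (ZMod 64)) * ↑e = 1 := e.inv_mul
    rw [he] at this
    linear_combination this
  rw [hGK] at hdvd
  exact (Polynomial.eq_of_monic_of_dvd_of_natDegree_le hh hG (hcop.dvd_of_dvd_mul_right hdvd)
    hdeg.ge).symm

lemma lift_cases {g : Polynomial (ZMod 2)} (hg : IsQRFactor 2 g) {g6 : Polynomial (ZMod 64)}
    (h1 : g6.Monic) (h2 : g6.natDegree = 11) (h3 : g6 ∣ Polynomial.X ^ 23 - 1)
    (h4 : g6.map red2 = g) : g6 = Polynomial.ofFn 12 qa ∨ g6 = Polynomial.ofFn 12 qb := by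
  have : Fact (Nat.Prime 2) := ⟨Nat.prime_two⟩
  obtain ⟨hm, hd, hirr, hdvd⟩ := hg
  obtain ⟨ma, da⟩ := ofFn_monic (r := qa) rfl
  obtain ⟨mb, db⟩ := ofFn_monic (r := qb) rfl
  have hfac : (Polynomial.X ^ 23 - 1 : Polynomial (ZMod 2)) = (Polynomial.X - 1) *
      (Polynomial.ofFn 12 qa).map red2 * (Polynomial.ofFn 12 qb).map red2 := by
    have := congrArg (Polynomial.map red2) X_pow_sub_one_eq
    simpa using this
  rw [hfac] at hdvd
  have hdeg : ∀ f : Polynomial (ZMod 64), f.Monic → (f.map red2).natDegree = f.natDegree :=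
    fun f hf => hf.natDegree_map red2
  rcases hirr.prime.dvd_or_dvd hdvd with hdvd | hdvd
  · rcases hirr.prime.dvd_or_dvd hdvd with hdvd | hdvd
    · have hX : (Polynomial.X - 1 : Polynomial (ZMod 2)).Monic := by
        have := Polynomial.monic_X_sub_C (1 : ZMod 2)
        rwa [map_one] at this
      have hle := Polynomial.natDegree_le_of_dvd hdvd hX.ne_zero
      have : (Polynomial.X - 1 : Polynomial (ZMod 2)).natDegree = 1 := by
        have := Polynomial.natDegree_X_sub_C (1 : ZMod 2)
        rwa [map_one] at this
      omega
    · left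
      have := Polynomial.eq_of_monic_of_dvd_of_natDegree_le hm (ma.map red2) hdvd
        (by rw [hdeg _ ma, da, hd])
      exact hensel_unique (K := (Polynomial.X - 1) * Polynomial.ofFn 12 qb)
        (by rw [X_pow_sub_one_eq]; ring) ma h1 (by rw [h2, da]) h3 (by rw [h4, this])
  · right
    have := Polynomial.eq_of_monic_of_dvd_of_natDegree_le hm (mb.map red2) hdvd
        (by rw [hdeg _ mb, db, hd])
    exact hensel_unique (K := (Polynomial.X - 1) * Polynomial.ofFn 12 qa)
        (by rw [X_pow_sub_one_eq]; ring) mb h1 (by rw [h2, db]) h3 (by rw [h4, this])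

/-! ### Identification of the code -/

/-- The entry `j` of the coefficient vector `r` shifted by `i` places. The decidability instances are
spelled out so that the kernel can evaluate it. -/
def shift (r : Fin 12 → ZMod 64) (i j : ℕ) : ZMod 64 :=
  @ite _ (i ≤ j) (Nat.decLe i j)
    (@dite _ (j - i < 12) (Nat.decLt _ _) (fun h => r ⟨j - i, h⟩) fun _ => 0) 0

/-- The generator matrix whose rows are the twelve shifts of `r`, extended by a parity check. -/
def gmat (r : Fin 12 → ZMod 64) : Matrix (Fin 12) (Fin 24) (ZMod 64) := fun i j =>
  if (j : ℕ) < 23 then shift r i j else -∑ l : Fin 23, shift r i l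

lemma coeff_mul_ofFn (r u : Fin 12 → ZMod 64) (j : ℕ) :
    (Polynomial.ofFn 12 u * Polynomial.ofFn 12 r).coeff j = ∑ i, u i * shift r i j := by
  rw [Polynomial.ofFn_eq_sum_monomial (v := u), Finset.sum_mul, Polynomial.finsetSum_coeff]
  refine Finset.sum_congr rfl fun i _ => ?_
  rw [← Polynomial.C_mul_X_pow_eq_monomial, mul_assoc, Polynomial.coeff_C_mul,
    Polynomial.coeff_X_pow_mul', shift]
  congr 1
  refine if_congr Iff.rfl ?_ rfl
  split_ifs with h
  · exact Polynomial.ofFn_coeff_eq_val_of_lt r h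
  · exact Polynomial.ofFn_coeff_eq_zero_of_ge r (not_lt.mp h)

/-- The extended cyclic code generated by a monic divisor of `X ^ 23 - 1` of degree 11 is the row space of
`gmat`. -/
lemma mem_code {g6 K : Polynomial (ZMod 64)} {r : Fin 12 → ZMod 64} (hr : r 11 = 1)
    (hg : g6 = Polynomial.ofFn 12 r) (hK : Polynomial.X ^ 23 - 1 = g6 * K)
    (c : Fin 24 → ZMod 64) :
    ((∃ f : Polynomial (ZMod 64), ∀ j : Fin 23,
          c (Fin.castSucc j) = ((f * g6) %ₘ (Polynomial.X ^ 23 - 1)).coeff (j : ℕ)) ∧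
        c (Fin.last 23) = - ∑ j : Fin 23, c (Fin.castSucc j)) ↔
      ∃ u, c = Matrix.vecMul u (gmat r) := by
  have hnt : Nontrivial (ZMod 64) := ⟨0, 1, by decide⟩
  obtain ⟨mg, dg⟩ := ofFn_monic hr
  rw [← hg] at mg dg
  have hX : (Polynomial.X ^ 23 - 1 : Polynomial (ZMod 64)).Monic := by
    have := Polynomial.monic_X_pow_sub_C (1 : ZMod 64) (n := 23) (by norm_num)
    rwa [map_one] at this
  have hdX : (Polynomial.X ^ 23 - 1 : Polynomial (ZMod 64)).natDegree = 23 := by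
    have := Polynomial.natDegree_X_pow_sub_C (n := 23) (r := (1 : ZMod 64))
    rwa [map_one] at this
  -- a word with the prescribed first coordinates and check coordinate is a row combination
  have hvec : ∀ u : Fin 12 → ZMod 64, c = Matrix.vecMul u (gmat r) ↔
      (∀ j : Fin 23, c (Fin.castSucc j) = ∑ i, u i * shift r i j) ∧
        c (Fin.last 23) = - ∑ j : Fin 23, c (Fin.castSucc j) := by
    intro u
    have e1 : ∀ j : Fin 23, Matrix.vecMul u (gmat r) (Fin.castSucc j) =
        ∑ i, u i * shift r i j := by
      intro j
      simp only [Matrix.vecMul, dotProduct, gmat, Fin.val_castSucc, j.isLt, if_true]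
    have e2 : Matrix.vecMul u (gmat r) (Fin.last 23) =
        -∑ j : Fin 23, ∑ i, u i * shift r i j := by
      simp only [Matrix.vecMul, dotProduct, gmat, Fin.val_last, lt_irrefl, if_false, mul_neg,
        Finset.sum_neg_distrib, Finset.mul_sum]
      rw [Finset.sum_comm]
    constructor
    · rintro rfl
      exact ⟨e1, by rw [e2]; simp only [e1]⟩
    · rintro ⟨h1, h2⟩
      funext j
      refine Fin.lastCases ?_ (fun j => ?_) j
      · rw [e2, h2]; simp only [h1]
      · rw [e1, h1]
  constructor
  · rintro ⟨⟨f, hf⟩, hlast⟩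
    have hdvd : g6 ∣ (f * g6) %ₘ (Polynomial.X ^ 23 - 1) := by
      have h := Polynomial.modByMonic_add_div (f * g6) (Polynomial.X ^ 23 - 1)
      have h2 : (f * g6) %ₘ (Polynomial.X ^ 23 - 1) =
        g6 * (f - K * (f * g6 /ₘ (Polynomial.X ^ 23 - 1))) := by
        linear_combination h - hK * (f * g6 /ₘ (Polynomial.X ^ 23 - 1))
      exact ⟨_, h2⟩
    obtain ⟨q, hq⟩ := hdvd
    have hlt : ((f * g6) %ₘ (Polynomial.X ^ 23 - 1)).natDegree < 23 := by
      have := Polynomial.natDegree_modByMonic_lt (f * g6) hX (by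
        intro h1; rw [h1] at hdX; simp at hdX)
      rwa [hdX] at this
    have hqd : q.natDegree < 12 := by
      by_cases hq0 : q = 0
      · simp [hq0]
      · rw [hq, mg.natDegree_mul' hq0, dg] at hlt
        omega
    refine ⟨Polynomial.toFn 12 q, (hvec _).mpr ⟨fun j => ?_, hlast⟩⟩
    rw [hf, hq, mul_comm, ← coeff_mul_ofFn, Polynomial.ofFn_comp_toFn_eq_id_of_natDegree_lt hqd, hg]
  · rintro ⟨u, hu⟩
    obtain ⟨h1, h2⟩ := (hvec u).mp hu
    refine ⟨⟨Polynomial.ofFn 12 u, fun j => ?_⟩, h2⟩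
    rw [h1, (Polynomial.modByMonic_eq_self_iff hX).mpr, hg, coeff_mul_ofFn]
    rw [Polynomial.degree_eq_natDegree hX.ne_zero, hdX]
    refine lt_of_le_of_lt Polynomial.degree_le_natDegree ?_
    have h3 := Polynomial.natDegree_mul_le (p := Polynomial.ofFn 12 u) (q := g6)
    have h4 := Polynomial.ofFn_natDegree_lt (by norm_num : 1 ≤ 12) u
    rw [dg] at h3
    exact_mod_cast (by omega : (Polynomial.ofFn 12 u * g6).natDegree < 23)

/-- The reversal of the first 23 coordinates; it exchanges the codes generated by `qa` and `qb`. -/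
def rev : Equiv.Perm (Fin 24) where
  toFun j := if h : (j : ℕ) < 23 then ⟨22 - j, by omega⟩ else j
  invFun j := if h : (j : ℕ) < 23 then ⟨22 - j, by omega⟩ else j
  left_inv := by decide
  right_inv := by decide

/-- The first twelve coefficients of the inverse of `qa` as a power series. Its shifts form the matrix
that transforms `gmat qa` to systematic form. -/
def inv : Fin 12 → ZMod 64 := ![63, 42, 3, 24, 22, 21, 60, 40, 41, 43, 3, 23]

/-- Two matrices that are multiples of each other have the same row space. -/
lemma vecMul_range {r : Fin 12 → ZMod 64} {π : Equiv.Perm (Fin 24)}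
    {U V : Matrix (Fin 12) (Fin 12) (ZMod 64)}
    (h1 : ∀ i j, gmat r i j = ∑ k, V i k * M0 k (π j))
    (h2 : ∀ k j, M0 k (π j) = ∑ i, U k i * gmat r i j) (c : Fin 24 → ZMod 64) :
    (∃ u, c = Matrix.vecMul u (gmat r)) ↔ ∃ u, c = word u ∘ π := by
  have e1 : gmat r = V * M0.submatrix id π := by ext i j; exact h1 i j
  have e2 : M0.submatrix id π = U * gmat r := by ext i j; exact h2 i j
  have e3 : ∀ u, word u ∘ π = Matrix.vecMul u (M0.submatrix id π) := fun u => rfl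
  constructor
  · rintro ⟨u, rfl⟩
    exact ⟨Matrix.vecMul u V, by rw [e3, Matrix.vecMul_vecMul, ← e1]⟩
  · rintro ⟨u, rfl⟩
    exact ⟨Matrix.vecMul u U, by rw [e3, Matrix.vecMul_vecMul, ← e2]⟩

/-- Equality of matrices as a Boolean test on natural numbers, which the kernel evaluates quickly. -/
lemma eq_of_all_eq (a b : Fin 12 → Fin 24 → ZMod 64)
    (h : (List.finRange 12).all (fun i => (List.finRange 24).all fun j =>
      (a i j).val == (b i j).val) = true) : ∀ i j, a i j = b i j := by
  intro i j
  have := List.all_eq_true.mp (List.all_eq_true.mp h i (List.mem_finRange i)) j (List.mem_finRange j)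
  exact ZMod.val_injective _ (by simpa using this)

lemma range_qa (c : Fin 24 → ZMod 64) :
    (∃ u, c = Matrix.vecMul u (gmat qa)) ↔ ∃ u, c = word u ∘ Equiv.refl (Fin 24) :=
  vecMul_range (V := fun i k => gmat qa i (Fin.castLE (by norm_num) k))
    (U := fun k i => shift inv k i)
    (eq_of_all_eq _ _ (by decide +kernel)) (eq_of_all_eq _ _ (by decide +kernel)) c

lemma range_qb (c : Fin 24 → ZMod 64) :
    (∃ u, c = Matrix.vecMul u (gmat qb)) ↔ ∃ u, c = word u ∘ rev :=
  vecMul_range (V := fun i k => gmat qb i (rev (Fin.castLE (by norm_num) k)))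
    (U := fun k i => -shift inv k i.rev)
    (eq_of_all_eq _ _ (by decide +kernel)) (eq_of_all_eq _ _ (by decide +kernel)) c

/-- The substituted weight enumerator does not depend on the order of the coordinates and is the sum of
the contributions `A p` of the classes modulo 2. -/
lemma sum_code {C : Submodule (ZMod 64) (Fin 24 → ZMod 64)} {π : Equiv.Perm (Fin 24)}
    (h : ∀ c, c ∈ C ↔ ∃ u, c = word u ∘ π) : aeval sub7 (swe 2 6 C) = ∑ p, A p := by
  have hinj : Function.Injective fun u : Fin 12 → ZMod 64 => word u ∘ π := by
    intro u u' huu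
    have hw : word u = word u' := π.surjective.injective_comp_right huu
    funext i
    rw [← word_castAdd u i, ← word_castAdd u' i, hw]
  have himg : (Finset.univ.filter fun c => c ∈ C) =
      Finset.univ.image fun u : Fin 12 → ZMod 64 => word u ∘ π := by
    ext c
    simp only [Finset.mem_filter, Finset.mem_univ, true_and, Finset.mem_image, h, eq_comm]
  rw [aeval_swe, ← Finset.sum_filter, himg, Finset.sum_image hinj.injOn]
  simp only [A, cls]
  rw [Finset.sum_fiberwise]
  exact Finset.sum_congr rfl fun u _ => Equiv.prod_comp π fun j => F (word u j)

lemma sum_D_A : ∑ p, D (A p) = 759 * (2 ^ 43 * bracket) := by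
  have h : ∀ p, D (A p) = if wt p = 8 then 2 ^ 43 * bracket else 0 := by
    intro p
    rcases class_cases p with h | ⟨h, hA⟩ | ⟨h, hA⟩
    · rw [D_A_eq_zero h, if_neg (by omega)]
    · rw [hA, if_pos h, D_A_octad]
    · rw [hA, if_neg (by omega), D_A_compl]
  simp only [h]
  rw [← Finset.sum_filter, Finset.sum_const, card_wt_eight, nsmul_eq_mul]
  norm_num

/-- The partial weight enumerator `D_{3,3}` for the binary lifted QR codes of length 24. -/
theorem stmt_9 (g : Polynomial (ZMod 2)) (hg : IsQRFactor 2 g)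
    (g6 : Polynomial (ZMod 64)) (C6 : Submodule (ZMod 64) (Fin 24 → ZMod 64))
    (hC6 : IsLiftedQR (by norm_num : (2:ℕ) ∣ 64) g g6 C6) :
    divPart (((2:ℚ) ^ 36)⁻¹ •
        aeval (![X 0, X 1, X 2, X 6 - X 5, X 6 + X 5 - 2 * X 4,
        X 6 + X 5 + 2 * X 4 - 4 * X 3, X 6 + X 5 + 2 * X 4 + 4 * X 3] : Fin 7 → MvPolynomial (Fin 7) ℚ) (swe 2 6 C6))
      0 3 =
      97152 * X 0 ^ 8 * X 3 ^ 8 *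
        (-(2 * X 1 ^ 4 * X 4 ^ 4) + X 1 ^ 4 * X 4 ^ 2 * X 5 ^ 2
          + X 1 ^ 2 * X 2 ^ 2 * X 4 ^ 4 - X 1 ^ 2 * X 2 ^ 2 * X 4 ^ 2 * X 5 ^ 2) := by
  obtain ⟨h1, h2, h3, h4, h5⟩ := hC6
  have hsum : aeval sub7 (swe 2 6 C6) = ∑ p, A p := by
    obtain ⟨K, hK⟩ := h3
    rcases lift_cases hg h1 h2 ⟨K, hK⟩ h4 with h | h
    · exact sum_code fun c => (h5 c).trans ((mem_code rfl h hK c).trans (range_qa c))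
    · exact sum_code fun c => (h5 c).trans ((mem_code rfl h hK c).trans (range_qb c))
  change D (((2:ℚ) ^ 36)⁻¹ • aeval sub7 (swe 2 6 C6)) = _
  have hc : (((2:ℚ) ^ 36)⁻¹ • (2 ^ 43 : MvPolynomial (Fin 7) ℚ)) = 128 := by
    rw [MvPolynomial.smul_eq_C_mul, ← map_ofNat MvPolynomial.C 2, ← map_pow, ← map_mul,
      ← map_ofNat MvPolynomial.C 128]
    norm_num
  rw [map_smul, hsum, map_sum, sum_D_A, mul_left_comm, ← smul_mul_assoc, hc, bracket]
  ring
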